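/- arXiv:1702.08193 — 3 statements merged into one kernel-verified Lean document; each statement's English description precedes it below -/
import Mathlib

section
/- For every 𝒜 ⊆ {C, N, P, D, T, 4}, the linear nested sequent calculus LNS_M𝒜ConW is sound and complete for the monotone modal logic M𝒜: for every formula A, A ∈ M𝒜 if and only if the linear nested sequent ⇒ A is derivable in LNS_M𝒜ConW. -/
/-- Monomodal formulas. -/
inductive Fm : Type
  | var : ℕ → Fm
  | bot : Fm
  | top : Fm
  | neg : Fm → Fm
  | and : Fm → Fm → Fm
  | or : Fm → Fm → Fm
  | imp : Fm → Fm → Fm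
  | box : Fm → Fm

/-- Evaluation of the propositional structure of a formula under an assignment
`v` of truth values to formulas (only used on atoms, i.e. propositional
variables and boxed formulas). -/
def evalP (v : Fm → Prop) : Fm → Prop
  | .var n => v (.var n)
  | .bot => False
  | .top => True
  | .neg A => ¬ evalP v A
  | .and A B => evalP v A ∧ evalP v B
  | .or A B => evalP v A ∨ evalP v B
  | .imp A B => evalP v A → evalP v B
  | .box A => v (.box A)

/-- `A` is an instance of a classical propositional tautology. -/
def Taut (A : Fm) : Prop := ∀ v, evalP v A

/-- A component of a (linear nested) sequent: a two-sided multiset sequent. -/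
abbrev Cmp := Multiset Fm × Multiset Fm

/-- A set of additional axioms for monotone modal logic `M`, among
`C, N, P, D, T, 4, 5`. -/
structure MAx where
  c : Bool := false
  n : Bool := false
  p : Bool := false
  d : Bool := false
  t : Bool := false
  four : Bool := false
  five : Bool := false

/-- Hilbert-style theoremhood in the extension `M𝒜` of monotone modal logic
`M` (classical propositional logic, the congruence rule and the axiom `M`)
with the axioms in `𝒜`. -/
inductive MThm (Ax : MAx) : Fm → Prop
  | taut {A} : Taut A → MThm Ax A
  | mp {A B} : MThm Ax (.imp A B) → MThm Ax A → MThm Ax B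
  | cong {A B} : MThm Ax (.imp A B) → MThm Ax (.imp B A) →
      MThm Ax (.imp (.box A) (.box B))
  | axM {A B} : MThm Ax (.imp (.box (.and A B)) (.and (.box A) (.box B)))
  | axC {A B} : Ax.c = true →
      MThm Ax (.imp (.and (.box A) (.box B)) (.box (.and A B)))
  | axN : Ax.n = true → MThm Ax (.box .top)
  | axP : Ax.p = true → MThm Ax (.neg (.box .bot))
  | axD {A} : Ax.d = true → MThm Ax (.neg (.and (.box A) (.box (.neg A))))
  | axT {A} : Ax.t = true → MThm Ax (.imp (.box A) A)
  | ax4 {A} : Ax.four = true → MThm Ax (.imp (.box A) (.box (.box A)))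
  | ax5 {A} : Ax.five = true → MThm Ax (.or (.box A) (.box (.neg (.box A))))

/-- A linear nested sequent of type `LNS^m`: a (nonempty) list of components
joined by the nesting `⫽`, optionally terminated by a unary nesting
`⫽ᵐ Σ ⇒ Π`. -/
abbrev LNSm := List Cmp × Option Cmp

/-- The linear nested sequent calculus `LNS_M𝒜ConW` for extensions of
monotone modal logic: classical propositional rules applied in any component
(but not inside `⫽ᵐ`), internal weakening and contraction, the modal rules
`□_R^m` and `□_L^m`, and the structural rule corresponding to each axiom in
`𝒜` (the rule `N` also being present whenever `5 ∈ 𝒜`, since `N` is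
derivable in `M5`). -/
inductive LM (Ax : MAx) : LNSm → Prop
  | init {pre post : List Cmp} {ep} {Γ Δ : Multiset Fm} {m : ℕ} :
      LM Ax (pre ++ (Fm.var m ::ₘ Γ, Fm.var m ::ₘ Δ) :: post, ep)
  | botL {pre post ep Γ Δ} :
      LM Ax (pre ++ (Fm.bot ::ₘ Γ, Δ) :: post, ep)
  | topR {pre post ep Γ Δ} :
      LM Ax (pre ++ (Γ, Fm.top ::ₘ Δ) :: post, ep)
  | negL {pre post ep Γ Δ A} :
      LM Ax (pre ++ (Γ, A ::ₘ Δ) :: post, ep) →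
      LM Ax (pre ++ (Fm.neg A ::ₘ Γ, Δ) :: post, ep)
  | negR {pre post ep Γ Δ A} :
      LM Ax (pre ++ (A ::ₘ Γ, Δ) :: post, ep) →
      LM Ax (pre ++ (Γ, Fm.neg A ::ₘ Δ) :: post, ep)
  | andL {pre post ep Γ Δ A B} :
      LM Ax (pre ++ (A ::ₘ B ::ₘ Γ, Δ) :: post, ep) →
      LM Ax (pre ++ (Fm.and A B ::ₘ Γ, Δ) :: post, ep)
  | andR {pre post ep Γ Δ A B} :
      LM Ax (pre ++ (Γ, A ::ₘ Δ) :: post, ep) →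
      LM Ax (pre ++ (Γ, B ::ₘ Δ) :: post, ep) →
      LM Ax (pre ++ (Γ, Fm.and A B ::ₘ Δ) :: post, ep)
  | orL {pre post ep Γ Δ A B} :
      LM Ax (pre ++ (A ::ₘ Γ, Δ) :: post, ep) →
      LM Ax (pre ++ (B ::ₘ Γ, Δ) :: post, ep) →
      LM Ax (pre ++ (Fm.or A B ::ₘ Γ, Δ) :: post, ep)
  | orR {pre post ep Γ Δ A B} :
      LM Ax (pre ++ (Γ, A ::ₘ B ::ₘ Δ) :: post, ep) →
      LM Ax (pre ++ (Γ, Fm.or A B ::ₘ Δ) :: post, ep)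
  | impL {pre post ep Γ Δ A B} :
      LM Ax (pre ++ (B ::ₘ Γ, Δ) :: post, ep) →
      LM Ax (pre ++ (Γ, A ::ₘ Δ) :: post, ep) →
      LM Ax (pre ++ (Fm.imp A B ::ₘ Γ, Δ) :: post, ep)
  | impR {pre post ep Γ Δ A B} :
      LM Ax (pre ++ (A ::ₘ Γ, B ::ₘ Δ) :: post, ep) →
      LM Ax (pre ++ (Γ, Fm.imp A B ::ₘ Δ) :: post, ep)
  | wkL {pre post ep Γ Δ A} :
      LM Ax (pre ++ (Γ, Δ) :: post, ep) →
      LM Ax (pre ++ (A ::ₘ Γ, Δ) :: post, ep)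
  | wkR {pre post ep Γ Δ A} :
      LM Ax (pre ++ (Γ, Δ) :: post, ep) →
      LM Ax (pre ++ (Γ, A ::ₘ Δ) :: post, ep)
  | conL {pre post ep Γ Δ A} :
      LM Ax (pre ++ (A ::ₘ A ::ₘ Γ, Δ) :: post, ep) →
      LM Ax (pre ++ (A ::ₘ Γ, Δ) :: post, ep)
  | conR {pre post ep Γ Δ A} :
      LM Ax (pre ++ (Γ, A ::ₘ A ::ₘ Δ) :: post, ep) →
      LM Ax (pre ++ (Γ, A ::ₘ Δ) :: post, ep)
  | boxRm {G Γ Δ B} :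
      LM Ax (G ++ [(Γ, Δ)], some (0, {B})) →
      LM Ax (G ++ [(Γ, Fm.box B ::ₘ Δ)], none)
  | boxLm {G Γ Δ Sg Pp A} :
      LM Ax (G ++ [(Γ, Δ), (A ::ₘ Sg, Pp)], none) →
      LM Ax (G ++ [(Fm.box A ::ₘ Γ, Δ)], some (Sg, Pp))
  | ruleC {c G Γ Δ} : Ax.c = true →
      LM Ax (c :: G, some (Γ, Δ)) →
      LM Ax ((c :: G) ++ [(Γ, Δ)], none)
  | ruleN {c G Γ Δ} : (Ax.n = true ∨ Ax.five = true) →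
      LM Ax ((c :: G) ++ [(Γ, Δ)], none) →
      LM Ax (c :: G, some (Γ, Δ))
  | ruleP {G Γ Δ} : Ax.p = true →
      LM Ax (G ++ [(Γ, Δ)], some (0, 0)) →
      LM Ax (G ++ [(Γ, Δ)], none)
  | ruleD {G Γ Δ A} : Ax.d = true →
      LM Ax (G ++ [(Γ, Δ)], some ({A}, 0)) →
      LM Ax (G ++ [(Fm.box A ::ₘ Γ, Δ)], none)
  | ruleT {G Γ Δ Sg Pp} : Ax.t = true →
      LM Ax (G ++ [(Γ, Δ)], some (Sg, Pp)) →
      LM Ax (G ++ [(Γ + Sg, Δ + Pp)], none)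
  | rule4 {G Γ Δ Sg Pp A} : Ax.four = true →
      LM Ax (G ++ [(Γ, Δ), (Fm.box A ::ₘ Sg, Pp)], none) →
      LM Ax (G ++ [(Fm.box A ::ₘ Γ, Δ)], some (Sg, Pp))
  | rule5 {G Γ Δ Sg Pp A} : Ax.five = true →
      LM Ax (G ++ [(Γ, Δ), (Sg, Fm.box A ::ₘ Pp)], none) →
      LM Ax (G ++ [(Γ, Fm.box A ::ₘ Δ)], some (Sg, Pp))

namespace LNSproof

/-- conjunction of a list -/
def conjL : List Fm → Fm
  | [] => .top
  | A :: l => .and A (conjL l)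

/-- disjunction of a list -/
def disjL : List Fm → Fm
  | [] => .bot
  | A :: l => .or A (disjL l)

theorem eval_conjL (v : Fm → Prop) (l : List Fm) :
    evalP v (conjL l) ↔ ∀ A ∈ l, evalP v A := by
  induction l with
  | nil => simp [conjL, evalP]
  | cons a l ih => simp [conjL, evalP, ih]

theorem eval_disjL (v : Fm → Prop) (l : List Fm) :
    evalP v (disjL l) ↔ ∃ A ∈ l, evalP v A := by
  induction l with
  | nil => simp [disjL, evalP]
  | cons a l ih => simp [disjL, evalP, ih]

/-- formula of a component -/
noncomputable def cf (X : Cmp) : Fm := .imp (conjL X.1.toList) (disjL X.2.toList)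

theorem eval_cf (v : Fm → Prop) (X : Cmp) :
    evalP v (cf X) ↔ ((∀ A ∈ X.1, evalP v A) → ∃ A ∈ X.2, evalP v A) := by
  simp [cf, evalP, eval_conjL, eval_disjL]

theorem tc1 {Ax A B} (h : MThm Ax A) (k : ∀ v, evalP v A → evalP v B) : MThm Ax B :=
  .mp (.taut (A := .imp A B) k) h

theorem tc2 {Ax A B C} (h : MThm Ax A) (h' : MThm Ax B)
    (k : ∀ v, evalP v A → evalP v B → evalP v C) : MThm Ax C :=
  .mp (.mp (.taut (A := .imp A (.imp B C)) k) h) h'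

theorem rm {Ax A B} (h : MThm Ax (.imp A B)) : MThm Ax (.imp (.box A) (.box B)) := by
  have h1 : MThm Ax (.imp (.box A) (.box (.and A B))) :=
    .cong (tc1 h (by intro v; simp only [evalP]; tauto)) (.taut (by intro v; simp only [evalP]; tauto))
  exact tc2 h1 (.axM (A := A) (B := B)) (by simp [evalP]; tauto)

theorem rmC {Ax : MAx} (hc : Ax.c = true) {A B C} (h : MThm Ax (.imp A (.imp B C))) :
    MThm Ax (.imp (.box A) (.imp (.box B) (.box C))) := by
  have h1 : MThm Ax (.imp (.box (.and A B)) (.box C)) :=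
    rm (tc1 h (by intro v; simp only [evalP]; tauto))
  exact tc2 h1 (.axC hc (A := A) (B := B)) (by simp [evalP]; tauto)

/-- formula of a linear nested sequent -/
noncomputable def F (c : Bool) : List Cmp → Option Cmp → Fm
  | [], _ => .bot
  | [X], none => cf X
  | [X], some E => .or (cf X) (.box (cf E))
  | X :: Y :: L, ep => if c then .or (cf X) (.box (F c (Y :: L) ep)) else cf X

theorem F_cons (c : Bool) (X : Cmp) (L : List Cmp) (ep) (h : L ≠ []) :
    F c (X :: L) ep = if c then .or (cf X) (.box (F c L ep)) else cf X := by
  cases L with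
  | nil => exact absurd rfl h
  | cons Y L => rw [F]

theorem F_head (c : Bool) (X : Cmp) (L : List Cmp) (ep) : ∃ R,
    ∀ X, F c (X :: L) ep = .or (cf X) R ∨ F c (X :: L) ep = cf X := by
  cases L with
  | nil =>
    cases ep with
    | none => exact ⟨.bot, fun X => .inr (by rw [F])⟩
    | some E => exact ⟨_, fun X => .inl (by rw [F])⟩
  | cons Y L =>
    refine ⟨.box (F c (Y :: L) ep), fun X => ?_⟩
    rw [F]; cases c <;> simp

/-- validity -/
def Val (Ax : MAx) : List Cmp → Option Cmp → Prop
  | [], _ => False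
  | X :: L, ep => MThm Ax (F Ax.c (X :: L) ep) ∨ Val Ax L ep

theorem F2 {Ax : MAx} {X1 X2 X : Cmp}
    (h : ∀ v, evalP v (cf X1) → evalP v (cf X2) → evalP v (cf X))
    (pre post : List Cmp) (ep) :
    MThm Ax (.imp (F Ax.c (pre ++ X1 :: post) ep)
      (.imp (F Ax.c (pre ++ X2 :: post) ep) (F Ax.c (pre ++ X :: post) ep))) := by
  induction pre with
  | nil =>
    apply MThm.taut
    intro v
    have := h v
    cases post with
    | nil => cases ep <;> simp [F, evalP] <;> tauto
    | cons Y L => cases hc : Ax.c <;> simp [F, evalP] <;> tauto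
  | cons Y pre ih =>
    simp only [List.cons_append]
    rw [F_cons _ _ _ _ (by simp), F_cons _ _ _ _ (by simp), F_cons _ _ _ _ (by simp)]
    cases hc : Ax.c
    · exact .taut (by intro v; simp [evalP]; try tauto)
    · have := rmC hc ih
      rw [hc] at this
      exact tc1 this (by intro v; simp only [evalP, if_true]; tauto)

theorem F_lift {Ax : MAx} {Y : Cmp} {L1 L2 : List Cmp} {e1 e2} (h1 : L1 ≠ []) (h2 : L2 ≠ [])
    (h : MThm Ax (.imp (F Ax.c L1 e1) (F Ax.c L2 e2))) :
    MThm Ax (.imp (F Ax.c (Y :: L1) e1) (F Ax.c (Y :: L2) e2)) := by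
  rw [F_cons _ _ _ _ h1, F_cons _ _ _ _ h2]
  cases hc : Ax.c
  · exact .taut (by intro v; simp [evalP])
  · have := rm h
    rw [hc] at this
    exact tc1 this (by intro v; simp only [evalP, if_true]; tauto)

theorem Val_mix {Ax : MAx} {X1 X2 X : Cmp}
    (h : ∀ v, evalP v (cf X1) → evalP v (cf X2) → evalP v (cf X))
    (pre post : List Cmp) (ep) (hv : Val Ax (pre ++ X2 :: post) ep) :
    Val Ax (pre ++ X :: post) ep ∨
    MThm Ax (.imp (F Ax.c (pre ++ X1 :: post) ep) (F Ax.c (pre ++ X :: post) ep)) := by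
  induction pre with
  | nil =>
    rcases hv with hv | hv
    · exact .inr (tc2 (F2 h [] post ep) hv (by simp [evalP]; tauto))
    · exact .inl (.inr hv)
  | cons Y pre ih =>
    rcases hv with hv | hv
    · exact .inr (tc2 (F2 h (Y :: pre) post ep) hv (by simp [evalP]; tauto))
    · rcases ih hv with h' | h'
      · exact .inl (.inr h')
      · exact .inr (F_lift (by simp) (by simp) h')

theorem Val2 {Ax : MAx} {X1 X2 X : Cmp}
    (h : ∀ v, evalP v (cf X1) → evalP v (cf X2) → evalP v (cf X))
    (pre post : List Cmp) (ep) (hv1 : Val Ax (pre ++ X1 :: post) ep)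
    (hv2 : Val Ax (pre ++ X2 :: post) ep) : Val Ax (pre ++ X :: post) ep := by
  have h' : ∀ v, evalP v (cf X2) → evalP v (cf X1) → evalP v (cf X) :=
    fun v a b => h v b a
  induction pre with
  | nil =>
    rcases hv1 with a | a
    · rcases hv2 with b | b
      · exact .inl (.mp (.mp (F2 h [] post ep) a) b)
      · exact .inr b
    · exact .inr a
  | cons Y pre ih =>
    rcases hv1 with a | a
    · rcases Val_mix h (Y :: pre) post ep hv2 with b | b
      · exact b
      · exact .inl (.mp b a)
    · rcases hv2 with b | b
      · rcases Val_mix h' (Y :: pre) post ep (.inr a) with c | c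
        · exact c
        · exact .inl (.mp c b)
      · exact .inr (ih a b)

theorem Val1 {Ax : MAx} {X1 X : Cmp} {pre post : List Cmp} {ep}
    (hv1 : Val Ax (pre ++ X1 :: post) ep)
    (h : ∀ v, evalP v (cf X1) → evalP v (cf X)) : Val Ax (pre ++ X :: post) ep :=
  Val2 (fun v a _ => h v a) pre post ep hv1 hv1

theorem Val_app {Ax : MAx} (pre L : List Cmp) (ep) (h : Val Ax L ep) : Val Ax (pre ++ L) ep := by
  induction pre with
  | nil => exact h
  | cons Y pre ih => exact .inr ih

theorem Val0 {Ax : MAx} {X : Cmp} {pre post : List Cmp} {ep}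
    (h : ∀ v, evalP v (cf X)) : Val Ax (pre ++ X :: post) ep := by
  apply Val_app
  left
  obtain ⟨R, hR⟩ := F_head Ax.c X post ep
  apply MThm.taut
  intro v
  rcases hR X with e | e <;> rw [e] <;> simp [evalP, h]

theorem F_tail {Ax : MAx} {L1 L2 : List Cmp} {e1 e2} (h1 : L1 ≠ []) (h2 : L2 ≠ [])
    (h : MThm Ax (.imp (F Ax.c L1 e1) (F Ax.c L2 e2))) (G : List Cmp) :
    MThm Ax (.imp (F Ax.c (G ++ L1) e1) (F Ax.c (G ++ L2) e2)) := by
  induction G with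
  | nil => exact h
  | cons Y G ih => exact F_lift (by simp [h1]) (by simp [h2]) ih

theorem Val_tail {Ax : MAx} {L1 L2 : List Cmp} {e1 e2} {G : List Cmp}
    (hv : Val Ax (G ++ L1) e1) (h1 : L1 ≠ []) (h2 : L2 ≠ [])
    (h : MThm Ax (.imp (F Ax.c L1 e1) (F Ax.c L2 e2)))
    (h' : Val Ax L1 e1 → Val Ax L2 e2)  :
    Val Ax (G ++ L2) e2 := by
  induction G with
  | nil => exact h' hv
  | cons Y G ih =>
    rcases hv with hv | hv
    · exact .inl (.mp (F_tail h1 h2 h (Y :: G)) hv)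
    · exact .inr (ih hv)

/-- single-component tails -/
theorem Val_tail1 {Ax : MAx} {X1 X2 : Cmp} {e1 e2} {G : List Cmp}
    (hv : Val Ax (G ++ [X1]) e1)
    (h : MThm Ax (.imp (F Ax.c [X1] e1) (F Ax.c [X2] e2))) :
    Val Ax (G ++ [X2]) e2 :=
  Val_tail hv (by simp) (by simp) h (by
    rintro (a | a)
    · exact .inl (.mp h a)
    · exact a.elim)

theorem Val_boxstep {Ax : MAx} {G Γ Δ Sg Pp A B}
    (hAB : MThm Ax (.imp (.box A) (.box B)))
    (h : Val Ax (G ++ [(Γ, Δ), (B ::ₘ Sg, Pp)]) none) :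
    Val Ax (G ++ [(Fm.box A ::ₘ Γ, Δ)]) (some (Sg, Pp)) := by
  have key : MThm Ax (.imp (cf (B ::ₘ Sg, Pp)) (.imp B (cf (Sg, Pp)))) :=
    .taut (by intro v; simp only [evalP, eval_cf, Multiset.mem_cons, forall_eq_or_imp]; tauto)
  refine Val_tail h (by simp) (by simp) ?_ ?_
  · rw [F_cons _ _ _ _ (by simp), F, F]
    cases hc : Ax.c
    · refine .taut ?_
      intro v
      simp only [evalP, eval_cf, Multiset.mem_cons, forall_eq_or_imp, Bool.false_eq_true, if_false]
      generalize (∀ A ∈ Γ, evalP v A) = a1, (∃ A ∈ Δ, evalP v A) = b1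
      tauto
    · have := rmC hc key
      refine tc2 this hAB ?_
      intro v
      simp only [evalP, eval_cf, Multiset.mem_cons, forall_eq_or_imp, if_true]
      generalize (∀ A ∈ Γ, evalP v A) = a1, (∃ A ∈ Δ, evalP v A) = b1
      tauto
  · rintro (a | a | a)
    · left
      rw [F_cons _ _ _ _ (by simp), F] at a
      rw [F]
      cases hc : Ax.c
      · rw [hc] at a
        refine tc1 a ?_
        intro v
        simp only [evalP, eval_cf, Multiset.mem_cons, forall_eq_or_imp, Bool.false_eq_true, if_false]
        generalize (∀ A ∈ Γ, evalP v A) = a1, (∃ A ∈ Δ, evalP v A) = b1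
        tauto
      · rw [hc] at a
        refine tc2 a (tc2 (rmC hc key) hAB (C := .imp (.box (cf (B ::ₘ Sg, Pp)))
          (.imp (.box A) (.box (cf (Sg, Pp))))) ?_) ?_
        · intro v; simp only [evalP]; tauto
        · intro v
          simp only [evalP, eval_cf, Multiset.mem_cons, forall_eq_or_imp, if_true]
          generalize (∀ A ∈ Γ, evalP v A) = a1, (∃ A ∈ Δ, evalP v A) = b1
          tauto
    · left
      rw [F] at a
      rw [F]
      have := rm (.mp key a)
      refine tc2 this hAB ?_
      intro v
      simp only [evalP, eval_cf, Multiset.mem_cons, forall_eq_or_imp]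
      generalize (∀ A ∈ Γ, evalP v A) = a1, (∃ A ∈ Δ, evalP v A) = b1
      tauto
    · exact a.elim

theorem snoc_form (c : Cmp) (G : List Cmp) : ∃ G' X, c :: G = G' ++ [X] :=
  ⟨(c :: G).dropLast, (c :: G).getLast (by simp), (List.dropLast_append_getLast _).symm⟩

theorem sound {Ax : MAx} (h5 : Ax.five = false) {S : LNSm} (h : LM Ax S) : Val Ax S.1 S.2 := by
  induction h with
  | init => refine Val0 fun v => ?_; simp [eval_cf]; tauto
  | botL => refine Val0 fun v => ?_; simp [eval_cf, evalP]
  | topR => refine Val0 fun v => ?_; simp [eval_cf, evalP]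
  | negL _ ih | negR _ ih | andL _ ih | orR _ ih | impR _ ih | wkL _ ih | wkR _ ih | conL _ ih
  | conR _ ih =>
    refine Val1 ih fun v => ?_
    simp only [evalP, eval_cf, Multiset.mem_cons, forall_eq_or_imp, exists_eq_or_imp]
    tauto
  | andR _ _ ih1 ih2 | orL _ _ ih1 ih2 | impL _ _ ih1 ih2 =>
    refine Val2 (fun v => ?_) _ _ _ ih1 ih2
    simp only [evalP, eval_cf, Multiset.mem_cons, forall_eq_or_imp, exists_eq_or_imp]
    tauto
  | @boxRm G Γ Δ B _ ih =>
    refine Val_tail1 ih ?_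
    rw [F, F]
    have : MThm Ax (.imp (cf (0, {B})) B) := .taut (by intro v; simp [evalP, eval_cf])
    refine tc1 (rm this) ?_
    intro v
    simp only [evalP, eval_cf, Multiset.mem_cons, forall_eq_or_imp, exists_eq_or_imp]
    tauto
  | boxLm _ ih => exact Val_boxstep (.taut (by intro v; simp [evalP])) ih
  | @ruleC c G Γ Δ hc _ ih =>
    obtain ⟨G', X, e⟩ := snoc_form c G
    simp only [e, List.append_assoc] at ih ⊢
    have e : F Ax.c [X] (some (Γ, Δ)) = F Ax.c ([X] ++ [(Γ, Δ)]) none := by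
      simp [F, hc]
    refine Val_tail ih (by simp) (by simp) ?_ ?_
    · rw [e]; exact .taut (by intro v; simp [evalP])
    · rintro (a | a)
      · left; rw [e] at a; exact a
      · exact a.elim
  | @ruleN c G Γ Δ hn _ ih =>
    have hn : Ax.n = true := by simpa [h5] using hn
    obtain ⟨G', X, e⟩ := snoc_form c G
    simp only [e, List.append_assoc] at ih ⊢
    have e : MThm Ax (.imp (F Ax.c ([X] ++ [(Γ, Δ)]) none) (F Ax.c [X] (some (Γ, Δ)))) := by
      refine .taut ?_
      intro v
      cases hc : Ax.c <;> simp [F, evalP]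
      tauto
    refine Val_tail ih (by simp) (by simp) e ?_
    rintro (a | a | a)
    · exact .inl (.mp e a)
    · left
      simp only [F] at a ⊢
      have : MThm Ax (.imp .top (cf (Γ, Δ))) := tc1 a (by simp [evalP])
      exact tc2 (rm this) (.axN hn) (by simp [evalP]; tauto)
    · exact a.elim
  | ruleP hp _ ih =>
    refine Val_tail1 ih ?_
    rw [F, F]
    have : MThm Ax (.imp (cf (0, 0)) .bot) := .taut (by intro v; simp [evalP, eval_cf])
    refine tc2 (rm this) (.axP hp) ?_
    intro v; simp only [evalP]; tauto
  | @ruleD G Γ Δ A hd _ ih =>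
    refine Val_tail1 ih ?_
    rw [F, F]
    have : MThm Ax (.imp (cf ({A}, 0)) (.neg A)) := .taut (by intro v; simp [evalP, eval_cf])
    refine tc2 (rm this) (.axD hd (A := A)) ?_
    intro v
    simp only [evalP, eval_cf, Multiset.mem_cons, forall_eq_or_imp, exists_eq_or_imp]
    tauto
  | @ruleT G Γ Δ Sg Pp ht _ ih =>
    refine Val_tail1 ih ?_
    rw [F, F]
    refine tc1 (.axT ht (A := cf (Sg, Pp))) ?_
    intro v
    have e1 : (∀ A ∈ Γ + Sg, evalP v A) ↔ (∀ A ∈ Γ, evalP v A) ∧ (∀ A ∈ Sg, evalP v A) := by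
      simp only [Multiset.mem_add, or_imp, forall_and]
    have e2 : (∃ A ∈ Δ + Pp, evalP v A) ↔ (∃ A ∈ Δ, evalP v A) ∨ (∃ A ∈ Pp, evalP v A) := by
      simp only [Multiset.mem_add, or_and_right, exists_or]
    simp only [evalP, eval_cf, e1, e2]
    generalize (∀ A ∈ Γ, evalP v A) = a1, (∃ A ∈ Δ, evalP v A) = b1,
      (∀ A ∈ Sg, evalP v A) = a2, (∃ A ∈ Pp, evalP v A) = b2
    tauto
  | rule4 h4 _ ih => exact Val_boxstep (.ax4 h4) ih
  | rule5 h _ _ => simp [h5] at h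

theorem sound' {Ax : MAx} (h5 : Ax.five = false) {A} (h : LM Ax ([(0, {A})], none)) :
    MThm Ax A := by
  rcases sound h5 h with a | a
  · simp only [F] at a
    exact tc1 a (by intro v; simp [eval_cf])
  · exact a.elim

end LNSproof
namespace LNSproof

/-- satisfaction in a neighbourhood model -/
def sat {W : Type} (N : W → (W → Prop) → Prop) (V : W → ℕ → Prop) : Fm → W → Prop
  | .var n => fun w => V w n
  | .bot => fun _ => False
  | .top => fun _ => True
  | .neg A => fun w => ¬ sat N V A w
  | .and A B => fun w => sat N V A w ∧ sat N V B w
  | .or A B => fun w => sat N V A w ∨ sat N V B w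
  | .imp A B => fun w => sat N V A w → sat N V B w
  | .box A => fun w => N w (sat N V A)

theorem sat_eval {W : Type} (N : W → (W → Prop) → Prop) (V : W → ℕ → Prop) (w : W) (A : Fm) :
    evalP (fun B => sat N V B w) A ↔ sat N V A w := by
  induction A <;> simp_all [evalP, sat]

theorem hilbert_sound {W : Type} (N : W → (W → Prop) → Prop) (V : W → ℕ → Prop) (Ax : MAx)
    (h5 : Ax.five = false)
    (hm : ∀ w S S', (∀ v, S v → S' v) → N w S → N w S')
    (hc : Ax.c = true → ∀ w S S', N w S → N w S' → N w (fun v => S v ∧ S' v))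
    (hn : Ax.n = true → ∀ w, N w (fun _ => True))
    (hp : Ax.p = true → ∀ w, ¬ N w (fun _ => False))
    (hd : Ax.d = true → ∀ w S, N w S → N w (fun v => ¬ S v) → False)
    (ht : Ax.t = true → ∀ w S, N w S → S w)
    (h4 : Ax.four = true → ∀ w S, N w S → N w (fun v => N v S))
    {A : Fm} (h : MThm Ax A) : ∀ w, sat N V A w := by
  induction h with
  | taut h => exact fun w => (sat_eval N V w _).1 (h _)
  | mp _ _ ih1 ih2 => exact fun w => ih1 w (ih2 w)
  | cong _ _ ih1 _ => exact fun w => hm w _ _ ih1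
  | axM => exact fun w h => ⟨hm w _ _ (fun v h => h.1) h, hm w _ _ (fun v h => h.2) h⟩
  | axC c => exact fun w h => hc c w _ _ h.1 h.2
  | axN n => exact hn n
  | axP p => exact hp p
  | axD d => exact fun w h => hd d w _ h.1 h.2
  | axT t => exact fun w h => ht t w _ h
  | ax4 f => exact fun w h => h4 f w _ h
  | ax5 f => simp [h5] at f

/-- sequent derivability in every context -/
def D (Ax : MAx) (Γ Δ : Multiset Fm) : Prop := ∀ G, LM Ax (G ++ [(Γ, Δ)], none)

/-- derivability from a set of signed formulas -/
def DS (Ax : MAx) (W : Set (Bool × Fm)) : Prop :=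
  ∃ Γ Δ : Multiset Fm, (∀ x ∈ Γ, (true, x) ∈ W) ∧ (∀ x ∈ Δ, (false, x) ∈ W) ∧ D Ax Γ Δ

variable {Ax : MAx}

theorem D_ext {Γ Δ : Multiset Fm} (h : D Ax Γ Δ) (G : List Cmp) (Θ Λ : Multiset Fm) :
    LM Ax (G ++ [(Θ, Λ), (Γ, Δ)], none) := by
  have e : G ++ [(Θ, Λ), (Γ, Δ)] = (G ++ [(Θ, Λ)]) ++ [(Γ, Δ)] := by
    rw [List.append_assoc]; rfl
  rw [e]
  exact h _

theorem D_wkL {Γ Δ : Multiset Fm} (h : D Ax Γ Δ) (S : Multiset Fm) : D Ax (S + Γ) Δ := by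
  induction S using Multiset.induction with
  | empty => simpa using h
  | cons a S ih => intro G; rw [Multiset.cons_add]; exact LM.wkL (post := []) (ih G)

theorem D_wkR {Γ Δ : Multiset Fm} (h : D Ax Γ Δ) (S : Multiset Fm) : D Ax Γ (S + Δ) := by
  induction S using Multiset.induction with
  | empty => simpa using h
  | cons a S ih => intro G; rw [Multiset.cons_add]; exact LM.wkR (post := []) (ih G)

theorem D_conL {Γ Δ : Multiset Fm} {A} (k : ℕ) (h : D Ax (Multiset.replicate k A + Γ) Δ) :
    D Ax (A ::ₘ Γ) Δ := by
  induction k with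
  | zero => simpa using D_wkL h {A}
  | succ k ih =>
    cases k with
    | zero => simpa using h
    | succ k =>
      apply ih
      intro G
      have := h G
      simp only [Multiset.replicate_succ, Multiset.cons_add] at this ⊢
      exact LM.conL (post := []) this

theorem D_conR {Γ Δ : Multiset Fm} {A} (k : ℕ) (h : D Ax Γ (Multiset.replicate k A + Δ)) :
    D Ax Γ (A ::ₘ Δ) := by
  induction k with
  | zero => simpa using D_wkR h {A}
  | succ k ih =>
    cases k with
    | zero => simpa using h
    | succ k =>
      apply ih
      intro G
      have := h G
      simp only [Multiset.replicate_succ, Multiset.cons_add] at this ⊢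
      exact LM.conR (post := []) this

open Classical in
theorem split_ms (Γ : Multiset Fm) (A : Fm) :
    Γ = Multiset.replicate (Γ.count A) A + Γ.filter (fun x => x ≠ A) := by
  rw [← Multiset.filter_eq', Multiset.filter_add_not]

open Classical in
theorem DS_insL {W : Set (Bool × Fm)} {A} (h : DS Ax (insert (true, A) W)) :
    ∃ Γ Δ : Multiset Fm, (∀ x ∈ Γ, (true, x) ∈ W) ∧ (∀ x ∈ Δ, (false, x) ∈ W) ∧
      D Ax (A ::ₘ Γ) Δ := by
  obtain ⟨Γ, Δ, h1, h2, h3⟩ := h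
  refine ⟨Γ.filter (fun x => x ≠ A), Δ, ?_, ?_, ?_⟩
  · intro x hx
    rw [Multiset.mem_filter] at hx
    simpa [hx.2] using h1 x hx.1
  · intro x hx
    simpa using h2 x hx
  · rw [split_ms Γ A] at h3
    exact D_conL _ h3

open Classical in
theorem DS_insR {W : Set (Bool × Fm)} {A} (h : DS Ax (insert (false, A) W)) :
    ∃ Γ Δ : Multiset Fm, (∀ x ∈ Γ, (true, x) ∈ W) ∧ (∀ x ∈ Δ, (false, x) ∈ W) ∧
      D Ax Γ (A ::ₘ Δ) := by
  obtain ⟨Γ, Δ, h1, h2, h3⟩ := h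
  refine ⟨Γ, Δ.filter (fun x => x ≠ A), ?_, ?_, ?_⟩
  · intro x hx
    simpa using h1 x hx
  · intro x hx
    rw [Multiset.mem_filter] at hx
    simpa [hx.2] using h2 x hx.1
  · rw [split_ms Δ A] at h3
    exact D_conR _ h3

theorem DS_mono {W W' : Set (Bool × Fm)} (h : W ⊆ W') (hd : DS Ax W) : DS Ax W' := by
  obtain ⟨Γ, Δ, h1, h2, h3⟩ := hd
  exact ⟨Γ, Δ, fun x hx => h (h1 x hx), fun x hx => h (h2 x hx), h3⟩

theorem DS_fin {W : Set (Bool × Fm)} (hd : DS Ax W) : ∃ Y ⊆ W, Y.Finite ∧ DS Ax Y := by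
  obtain ⟨Γ, Δ, h1, h2, h3⟩ := hd
  refine ⟨(fun x => (true, x)) '' {x | x ∈ Γ} ∪ (fun x => (false, x)) '' {x | x ∈ Δ}, ?_, ?_,
    Γ, Δ, ?_, ?_, h3⟩
  · rintro _ (⟨x, hx, rfl⟩ | ⟨x, hx, rfl⟩)
    · exact h1 x hx
    · exact h2 x hx
  · exact ((Multiset.finite_toSet Γ).image _).union ((Multiset.finite_toSet Δ).image _)
  · intro x hx; exact .inl ⟨x, hx, rfl⟩
  · intro x hx; exact .inr ⟨x, hx, rfl⟩

/-- worlds -/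
def World (Ax : MAx) : Type :=
  {W : Set (Bool × Fm) // ¬ DS Ax W ∧ ∀ s, s ∉ W → DS Ax (insert s W)}

theorem exists_world {W : Set (Bool × Fm)} (h : ¬ DS Ax W) : ∃ w : World Ax, W ⊆ w.1 := by
  have hF : Order.IsOfFiniteCharacter {W | ¬ DS Ax W} := by
    intro x
    constructor
    · intro hx y hy _ hd
      exact hx (DS_mono hy hd)
    · intro hx hd
      obtain ⟨Y, h1, h2, h3⟩ := DS_fin hd
      exact hx Y h1 h2 h3
  obtain ⟨m, hm, hmax⟩ := hF.exists_maximal h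
  refine ⟨⟨m, hmax.1, fun s hs => ?_⟩, hm⟩
  by_contra hc
  exact hs (hmax.2 hc (Set.subset_insert s m) (Set.mem_insert s m))

theorem D_absL {Γ' Γ Δ : Multiset Fm} (hs : ∀ x ∈ Γ', x ∈ Γ) (h : D Ax (Γ' + Γ) Δ) :
    D Ax Γ Δ := by
  induction Γ' using Multiset.induction with
  | empty => simpa using h
  | cons a S ih =>
    refine ih (fun x hx => hs x (by simp [hx])) ?_
    obtain ⟨T, rfl⟩ := Multiset.exists_cons_of_mem (hs a (by simp))
    intro G
    have := h G
    rw [Multiset.cons_add, Multiset.add_cons] at this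
    rw [Multiset.add_cons]
    exact LM.conL (post := []) this

theorem D_absR {Γ Δ' Δ : Multiset Fm} (hs : ∀ x ∈ Δ', x ∈ Δ) (h : D Ax Γ (Δ' + Δ)) :
    D Ax Γ Δ := by
  induction Δ' using Multiset.induction with
  | empty => simpa using h
  | cons a S ih =>
    refine ih (fun x hx => hs x (by simp [hx])) ?_
    obtain ⟨T, rfl⟩ := Multiset.exists_cons_of_mem (hs a (by simp))
    intro G
    have := h G
    rw [Multiset.cons_add, Multiset.add_cons] at this
    rw [Multiset.add_cons]
    exact LM.conR (post := []) this

theorem D_of_no_world {Γ Δ : Multiset Fm}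
    (h : ∀ w : World Ax, (∀ x ∈ Γ, (true, x) ∈ w.1) → (∀ x ∈ Δ, (false, x) ∈ w.1) → False) :
    D Ax Γ Δ := by
  by_contra hD
  have : ¬ DS Ax ((fun x => (true, x)) '' {x | x ∈ Γ} ∪ (fun x => (false, x)) '' {x | x ∈ Δ}) := by
    rintro ⟨Γ', Δ', h1, h2, h3⟩
    have h1 : ∀ x ∈ Γ', x ∈ Γ := fun x hx => by simpa using h1 x hx
    have h2 : ∀ x ∈ Δ', x ∈ Δ := fun x hx => by simpa using h2 x hx
    apply hD
    apply D_absL h1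
    apply D_absR h2
    have := D_wkL (D_wkR h3 Δ) Γ
    rwa [add_comm Γ', add_comm Δ']
  obtain ⟨w, hw⟩ := exists_world this
  exact h w (fun x hx => hw (.inl ⟨x, hx, rfl⟩)) (fun x hx => hw (.inr ⟨x, hx, rfl⟩))

section sat

variable (w : World Ax)

theorem w_not {Γ Δ : Multiset Fm} (h1 : ∀ x ∈ Γ, (true, x) ∈ w.1)
    (h2 : ∀ x ∈ Δ, (false, x) ∈ w.1) (h : D Ax Γ Δ) : False := w.2.1 ⟨Γ, Δ, h1, h2, h⟩

theorem w_L {A} (h : (true, A) ∉ w.1) : ∃ Γ Δ : Multiset Fm, (∀ x ∈ Γ, (true, x) ∈ w.1) ∧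
    (∀ x ∈ Δ, (false, x) ∈ w.1) ∧ D Ax (A ::ₘ Γ) Δ := DS_insL (w.2.2 _ h)

theorem w_R {A} (h : (false, A) ∉ w.1) : ∃ Γ Δ : Multiset Fm, (∀ x ∈ Γ, (true, x) ∈ w.1) ∧
    (∀ x ∈ Δ, (false, x) ∈ w.1) ∧ D Ax Γ (A ::ₘ Δ) := DS_insR (w.2.2 _ h)

theorem s_negL {A} (h : (true, Fm.neg A) ∈ w.1) : (false, A) ∈ w.1 := by
  by_contra hc
  obtain ⟨Γ, Δ, h1, h2, h3⟩ := w_R w hc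
  exact w_not w (Γ := Fm.neg A ::ₘ Γ) (by simpa [h] using h1) h2
    (fun G => LM.negL (post := []) (h3 G))

theorem s_negR {A} (h : (false, Fm.neg A) ∈ w.1) : (true, A) ∈ w.1 := by
  by_contra hc
  obtain ⟨Γ, Δ, h1, h2, h3⟩ := w_L w hc
  exact w_not w (Δ := Fm.neg A ::ₘ Δ) h1 (by simpa [h] using h2)
    (fun G => LM.negR (post := []) (h3 G))

theorem s_andL {A B} (h : (true, Fm.and A B) ∈ w.1) : (true, A) ∈ w.1 ∧ (true, B) ∈ w.1 := by
  constructor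
  · by_contra hc
    obtain ⟨Γ, Δ, h1, h2, h3⟩ := w_L w hc
    refine w_not w (Γ := Fm.and A B ::ₘ Γ) (by simpa [h] using h1) h2
      (fun G => LM.andL (post := []) ?_)
    rw [Multiset.cons_swap]
    exact LM.wkL (post := []) (h3 G)
  · by_contra hc
    obtain ⟨Γ, Δ, h1, h2, h3⟩ := w_L w hc
    refine w_not w (Γ := Fm.and A B ::ₘ Γ) (by simpa [h] using h1) h2
      (fun G => LM.andL (post := []) ?_)
    exact LM.wkL (post := []) (h3 G)

theorem s_orR {A B} (h : (false, Fm.or A B) ∈ w.1) : (false, A) ∈ w.1 ∧ (false, B) ∈ w.1 := by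
  constructor
  · by_contra hc
    obtain ⟨Γ, Δ, h1, h2, h3⟩ := w_R w hc
    refine w_not w (Δ := Fm.or A B ::ₘ Δ) h1 (by simpa [h] using h2)
      (fun G => LM.orR (post := []) ?_)
    rw [Multiset.cons_swap]
    exact LM.wkR (post := []) (h3 G)
  · by_contra hc
    obtain ⟨Γ, Δ, h1, h2, h3⟩ := w_R w hc
    refine w_not w (Δ := Fm.or A B ::ₘ Δ) h1 (by simpa [h] using h2)
      (fun G => LM.orR (post := []) ?_)
    exact LM.wkR (post := []) (h3 G)

theorem s_impR {A B} (h : (false, Fm.imp A B) ∈ w.1) : (true, A) ∈ w.1 ∧ (false, B) ∈ w.1 := by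
  constructor
  · by_contra hc
    obtain ⟨Γ, Δ, h1, h2, h3⟩ := w_L w hc
    refine w_not w (Δ := Fm.imp A B ::ₘ Δ) h1 (by simpa [h] using h2)
      (fun G => LM.impR (post := []) ?_)
    exact LM.wkR (post := []) (h3 G)
  · by_contra hc
    obtain ⟨Γ, Δ, h1, h2, h3⟩ := w_R w hc
    refine w_not w (Δ := Fm.imp A B ::ₘ Δ) h1 (by simpa [h] using h2)
      (fun G => LM.impR (post := []) ?_)
    exact LM.wkL (post := []) (h3 G)

theorem D_join {Γ Δ Γ' Δ' : Multiset Fm} (h : D Ax Γ Δ) : D Ax (Γ + Γ') (Δ + Δ') := by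
  rw [add_comm Γ, add_comm Δ]
  exact D_wkL (D_wkR h _) _

theorem s_andR {A B} (h : (false, Fm.and A B) ∈ w.1) : (false, A) ∈ w.1 ∨ (false, B) ∈ w.1 := by
  by_contra hc
  rw [not_or] at hc
  obtain ⟨Γ, Δ, h1, h2, h3⟩ := w_R w hc.1
  obtain ⟨Γ', Δ', h1', h2', h3'⟩ := w_R w hc.2
  refine w_not w (Γ := Γ + Γ') (Δ := Fm.and A B ::ₘ (Δ + Δ')) ?_ ?_
    (fun G => LM.andR (post := []) ?_ ?_)
  · intro x hx; rcases Multiset.mem_add.1 hx with hx | hx; exacts [h1 x hx, h1' x hx]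
  · intro x hx
    rcases Multiset.mem_cons.1 hx with rfl | hx
    · exact h
    rcases Multiset.mem_add.1 hx with hx | hx; exacts [h2 x hx, h2' x hx]
  · have := D_join h3 (Γ' := Γ') (Δ' := Δ') G
    simpa [Multiset.cons_add] using this
  · have := D_join h3' (Γ' := Γ) (Δ' := Δ) G
    rw [add_comm Γ, add_comm Δ]
    simpa [Multiset.cons_add] using this

theorem s_orL {A B} (h : (true, Fm.or A B) ∈ w.1) : (true, A) ∈ w.1 ∨ (true, B) ∈ w.1 := by
  by_contra hc
  rw [not_or] at hc
  obtain ⟨Γ, Δ, h1, h2, h3⟩ := w_L w hc.1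
  obtain ⟨Γ', Δ', h1', h2', h3'⟩ := w_L w hc.2
  refine w_not w (Γ := Fm.or A B ::ₘ (Γ + Γ')) (Δ := Δ + Δ') ?_ ?_
    (fun G => LM.orL (post := []) ?_ ?_)
  · intro x hx
    rcases Multiset.mem_cons.1 hx with rfl | hx
    · exact h
    rcases Multiset.mem_add.1 hx with hx | hx; exacts [h1 x hx, h1' x hx]
  · intro x hx; rcases Multiset.mem_add.1 hx with hx | hx; exacts [h2 x hx, h2' x hx]
  · have := D_join h3 (Γ' := Γ') (Δ' := Δ') G
    simpa [Multiset.cons_add] using this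
  · have := D_join h3' (Γ' := Γ) (Δ' := Δ) G
    rw [add_comm Γ, add_comm Δ]
    simpa [Multiset.cons_add] using this

theorem s_impL {A B} (h : (true, Fm.imp A B) ∈ w.1) : (false, A) ∈ w.1 ∨ (true, B) ∈ w.1 := by
  by_contra hc
  rw [not_or] at hc
  obtain ⟨Γ, Δ, h1, h2, h3⟩ := w_R w hc.1
  obtain ⟨Γ', Δ', h1', h2', h3'⟩ := w_L w hc.2
  refine w_not w (Γ := Fm.imp A B ::ₘ (Γ + Γ')) (Δ := Δ + Δ') ?_ ?_
    (fun G => LM.impL (post := []) ?_ ?_)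
  · intro x hx
    rcases Multiset.mem_cons.1 hx with rfl | hx
    · exact h
    rcases Multiset.mem_add.1 hx with hx | hx; exacts [h1 x hx, h1' x hx]
  · intro x hx; rcases Multiset.mem_add.1 hx with hx | hx; exacts [h2 x hx, h2' x hx]
  · have := D_join h3' (Γ' := Γ) (Δ' := Δ) G
    rw [add_comm Γ, add_comm Δ]
    simpa [Multiset.cons_add] using this
  · have := D_join h3 (Γ' := Γ') (Δ' := Δ') G
    simpa [Multiset.cons_add] using this

theorem s_T {A} (ht : Ax.t = true) (h : (true, Fm.box A) ∈ w.1) : (true, A) ∈ w.1 := by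
  by_contra hc
  obtain ⟨Γ, Δ, h1, h2, h3⟩ := w_L w hc
  refine w_not w (Γ := Fm.box A ::ₘ Γ) (by simpa [h] using h1) h2 (fun G => ?_)
  have a : LM Ax (G ++ [(Fm.box A ::ₘ 0, 0)], some (Γ, Δ)) :=
    LM.boxLm (D_ext h3 G 0 0)
  simpa using LM.ruleT ht a

/-- generators of neighbourhoods -/
def Gen (B : Fm) : Prop :=
  (true, Fm.box B) ∈ w.1 ∨ (Ax.four = true ∧ (true, B) ∈ w.1 ∧ ∃ A, B = .box A)

/-- neighbourhood basis -/
def Bas (Γ : Multiset Fm) : Prop :=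
  Γ ≠ 0 ∧ (Ax.c = false → Γ.card = 1) ∧ ∀ B ∈ Γ, Gen w B

/-- the canonical neighbourhood function -/
def Nb (S : World Ax → Prop) : Prop :=
  (Ax.n = true ∧ ∀ v, S v) ∨
  ∃ Γ : Multiset Fm, Bas w Γ ∧ ∀ v : World Ax, (∀ B ∈ Γ, (true, B) ∈ v.1) → S v

theorem unbox1 {B} (h : Gen w B) : ∃ C, (true, C) ∈ w.1 ∧ ∀ G Θ Δ Sg Pp,
    LM Ax (G ++ [(Θ, Δ), (B ::ₘ Sg, Pp)], none) →
    LM Ax (G ++ [(C ::ₘ Θ, Δ)], some (Sg, Pp)) := by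
  rcases h with h | ⟨h4, h, A, rfl⟩
  · exact ⟨_, h, fun G Θ Δ Sg Pp => LM.boxLm⟩
  · exact ⟨_, h, fun G Θ Δ Sg Pp => LM.rule4 h4⟩

theorem unboxC (hc : Ax.c = true) (Γ : Multiset Fm) (h0 : Γ ≠ 0) (h : ∀ B ∈ Γ, Gen w B) :
    ∃ Γ' : Multiset Fm, (∀ x ∈ Γ', (true, x) ∈ w.1) ∧ ∀ G Θ Δ Sg Pp,
    LM Ax (G ++ [(Θ, Δ), (Γ + Sg, Pp)], none) →
    LM Ax (G ++ [(Γ' + Θ, Δ)], some (Sg, Pp)) := by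
  induction Γ using Multiset.induction with
  | empty => exact absurd rfl h0
  | cons a Γ ih =>
    obtain ⟨C, hC, hC'⟩ := unbox1 w (h a (by simp))
    by_cases e : Γ = 0
    · subst e
      refine ⟨{C}, by simpa using hC, fun G Θ Δ Sg Pp hh => ?_⟩
      have := hC' G Θ Δ Sg Pp (by simpa using hh)
      simpa using this
    · obtain ⟨Γ', h1, h2⟩ := ih e (fun B hB => h B (by simp [hB]))
      refine ⟨C ::ₘ Γ', by simpa [hC] using h1, fun G Θ Δ Sg Pp hh => ?_⟩
      rw [Multiset.cons_add, ← Multiset.add_cons] at hh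
      have a1 := h2 _ _ _ _ _ hh
      have a2 : LM Ax (G ++ [(Γ' + Θ, Δ), (a ::ₘ Sg, Pp)], none) := by
        cases G with
        | nil => exact LM.ruleC (G := []) hc a1
        | cons c G =>
          have := LM.ruleC (c := c) (G := G ++ [(Γ' + Θ, Δ)]) hc a1
          simpa using this
      simpa using hC' _ _ _ _ _ a2

theorem unbox {Γ : Multiset Fm} (h : Bas w Γ) :
    ∃ Γ' : Multiset Fm, (∀ x ∈ Γ', (true, x) ∈ w.1) ∧ ∀ G Θ Δ Sg Pp,
    LM Ax (G ++ [(Θ, Δ), (Γ + Sg, Pp)], none) →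
    LM Ax (G ++ [(Γ' + Θ, Δ)], some (Sg, Pp)) := by
  obtain ⟨h0, h1, h2⟩ := h
  cases hc : Ax.c with
  | true => exact unboxC w hc Γ h0 h2
  | false =>
    obtain ⟨a, rfl⟩ := Multiset.card_eq_one.1 (h1 hc)
    obtain ⟨C, hC, hC'⟩ := unbox1 w (h2 a (by simp))
    refine ⟨{C}, by simpa using hC, fun G Θ Δ Sg Pp hh => ?_⟩
    have := hC' G Θ Δ Sg Pp (by simpa using hh)
    simpa using this

theorem no_D (hd : Ax.d = true) {Γ : Multiset Fm} (hc : Ax.c = false → Γ.card ≤ 2)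
    (hg : ∀ B ∈ Γ, Gen w B) (h : D Ax Γ 0) : False := by
  by_cases hb : ∃ B ∈ Γ, (true, Fm.box B) ∈ w.1
  · obtain ⟨B, hB, hB'⟩ := hb
    obtain ⟨T, rfl⟩ := Multiset.exists_cons_of_mem hB
    have key : ∃ T', Bas w T' ∧ D Ax (T' + {B}) 0 := by
      by_cases e : T = 0
      · subst e
        refine ⟨{B}, ⟨by simp, by simp, by simpa using hg B (by simp)⟩, ?_⟩
        exact D_wkL h _
      · refine ⟨T, ⟨e, fun c => ?_, fun x hx => hg x (by simp [hx])⟩, ?_⟩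
        · have := hc c
          have h3 := Multiset.card_pos.2 e
          simp at this
          omega
        · rwa [add_comm, Multiset.singleton_add]
    obtain ⟨T', hT, hD⟩ := key
    obtain ⟨Γ', h1, h2⟩ := unbox w hT
    refine w_not w (Γ := Fm.box B ::ₘ Γ') (Δ := 0) (by simpa [hB'] using h1) (by simp) fun G => ?_
    have := h2 G 0 0 {B} 0 (by simpa using D_ext hD G 0 0)
    simpa using LM.ruleD hd this
  · refine w_not w (Γ := Γ) (Δ := 0) (fun x hx => ?_) (by simp) h
    rcases hg x hx with h | h
    · exact absurd ⟨x, hx, h⟩ hb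
    · exact h.2.1

end sat

open Classical in
theorem truth (A : Fm) : ∀ w : World Ax,
    ((true, A) ∈ w.1 → sat Nb (fun w n => (true, Fm.var n) ∈ w.1) A w) ∧
    ((false, A) ∈ w.1 → ¬ sat Nb (fun w n => (true, Fm.var n) ∈ w.1) A w) := by
  induction A with
  | var n =>
    intro w
    refine ⟨fun h => h, fun h h' => ?_⟩
    exact w_not w (Γ := {.var n}) (Δ := {.var n}) (by simpa [sat] using h') (by simpa using h)
      (fun G => LM.init (post := []) (Γ := 0) (Δ := 0))
  | bot =>
    intro w
    refine ⟨fun h => ?_, fun h h' => h'⟩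
    exact (w_not w (Γ := {.bot}) (Δ := 0) (by simpa using h) (by simp)
      (fun G => LM.botL (post := []) (Γ := 0))).elim
  | top =>
    intro w
    refine ⟨fun h => trivial, fun h => ?_⟩
    exact (w_not w (Γ := 0) (Δ := {.top}) (by simp) (by simpa using h)
      (fun G => LM.topR (post := []) (Δ := 0))).elim
  | neg A ih =>
    intro w
    exact ⟨fun h => (ih w).2 (s_negL w h), fun h h' => h' ((ih w).1 (s_negR w h))⟩
  | and A B ihA ihB =>
    intro w
    refine ⟨fun h => ⟨(ihA w).1 (s_andL w h).1, (ihB w).1 (s_andL w h).2⟩, fun h h' => ?_⟩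
    rcases s_andR w h with a | a
    · exact (ihA w).2 a h'.1
    · exact (ihB w).2 a h'.2
  | or A B ihA ihB =>
    intro w
    refine ⟨fun h => ?_, fun h h' => ?_⟩
    · rcases s_orL w h with a | a
      · exact .inl ((ihA w).1 a)
      · exact .inr ((ihB w).1 a)
    · rcases h' with a | a
      · exact (ihA w).2 (s_orR w h).1 a
      · exact (ihB w).2 (s_orR w h).2 a
  | imp A B ihA ihB =>
    intro w
    refine ⟨fun h h' => ?_, fun h h' => ?_⟩
    · rcases s_impL w h with a | a
      · exact ((ihA w).2 a h').elim
      · exact (ihB w).1 a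
    · exact (ihB w).2 (s_impR w h).2 (h' ((ihA w).1 (s_impR w h).1))
  | box A ih =>
    intro w
    refine ⟨fun h => ?_, fun h h' => ?_⟩
    · refine .inr ⟨{A}, ⟨by simp, by simp, ?_⟩, fun v hv => (ih v).1 (hv A (by simp))⟩
      intro B hB
      rw [Multiset.mem_singleton] at hB
      exact .inl (hB ▸ h)
    · rcases h' with ⟨hn, hv⟩ | ⟨Γ, hb, hv⟩
      · have hD : D Ax 0 {A} := D_of_no_world fun v _ h2 => (ih v).2 (h2 A (by simp)) (hv v)
        refine w_not w (Γ := 0) (Δ := Fm.box A ::ₘ 0) (by simp) (by simpa using h) fun G => ?_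
        apply LM.boxRm
        have a := D_ext hD G 0 0
        cases G with
        | nil => exact LM.ruleN (G := []) (.inl hn) a
        | cons c G =>
          refine LM.ruleN (c := c) (G := G ++ [(0, 0)]) (.inl hn) ?_
          rw [List.cons_append, List.append_assoc]
          exact a
      · have hD : D Ax Γ {A} := D_of_no_world fun v h1 h2 => (ih v).2 (h2 A (by simp)) (hv v h1)
        obtain ⟨Γ', h1, h2⟩ := unbox w hb
        refine w_not w (Γ := Γ') (Δ := Fm.box A ::ₘ 0) h1 (by simpa using h) fun G => ?_
        apply LM.boxRm
        have := h2 G 0 0 0 {A} (by simpa using D_ext hD G 0 0)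
        simpa using this

open Classical in
theorem complete (h5 : Ax.five = false) {A : Fm} (h : MThm Ax A) : LM Ax ([(0, {A})], none) := by
  suffices hD : D Ax 0 {A} from hD []
  refine D_of_no_world fun w _ h2 => (truth A w).2 (h2 A (by simp)) ?_
  refine hilbert_sound _ _ Ax h5 ?_ ?_ ?_ ?_ ?_ ?_ ?_ h w
  · rintro w S S' hS (⟨hn, h⟩ | ⟨Γ, hb, h⟩)
    · exact .inl ⟨hn, fun v => hS v (h v)⟩
    · exact .inr ⟨Γ, hb, fun v hv => hS v (h v hv)⟩
  · rintro hc w S S' (⟨hn, h⟩ | ⟨Γ, hb, h⟩) (⟨hn', h'⟩ | ⟨Γ', hb', h'⟩)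
    · exact .inl ⟨hn, fun v => ⟨h v, h' v⟩⟩
    · exact .inr ⟨Γ', hb', fun v hv => ⟨h v, h' v hv⟩⟩
    · exact .inr ⟨Γ, hb, fun v hv => ⟨h v hv, h' v⟩⟩
    · refine .inr ⟨Γ + Γ', ⟨?_, by simp [hc], ?_⟩, fun v hv => ⟨h v ?_, h' v ?_⟩⟩
      · intro e; exact hb.1 (add_eq_zero.1 e).1
      · intro x hx
        rcases Multiset.mem_add.1 hx with hx | hx
        exacts [hb.2.2 x hx, hb'.2.2 x hx]
      · exact fun B hB => hv B (Multiset.mem_add.2 (.inl hB))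
      · exact fun B hB => hv B (Multiset.mem_add.2 (.inr hB))
  · exact fun hn w => .inl ⟨hn, fun _ => trivial⟩
  · rintro hp w (⟨hn, h⟩ | ⟨Γ, hb, h⟩)
    · exact h w
    · have hD : D Ax Γ 0 := D_of_no_world fun v h1 _ => h v h1
      obtain ⟨Γ', h1, h2⟩ := unbox w hb
      refine w_not w (Γ := Γ') (Δ := 0) h1 (by simp) fun G => ?_
      apply LM.ruleP hp
      have := h2 G 0 0 0 0 (by simpa using D_ext hD G 0 0)
      simpa using this
  · rintro hd w S (⟨hn, h⟩ | ⟨Γ, hb, h⟩) (⟨hn', h'⟩ | ⟨Γ', hb', h'⟩)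
    · exact h' w (h w)
    · have hD : D Ax Γ' 0 := D_of_no_world fun v h1 _ => h' v h1 (h v)
      exact no_D w hd (fun c => by rw [hb'.2.1 c]; omega) hb'.2.2 hD
    · have hD : D Ax Γ 0 := D_of_no_world fun v h1 _ => h' v (h v h1)
      exact no_D w hd (fun c => by rw [hb.2.1 c]; omega) hb.2.2 hD
    · have hD : D Ax (Γ + Γ') 0 := D_of_no_world fun v h1 _ =>
        h' v (fun B hB => h1 B (Multiset.mem_add.2 (.inr hB)))
          (h v (fun B hB => h1 B (Multiset.mem_add.2 (.inl hB))))
      refine no_D w hd (fun c => by rw [Multiset.card_add, hb.2.1 c, hb'.2.1 c]) ?_ hD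
      intro x hx
      rcases Multiset.mem_add.1 hx with hx | hx
      exacts [hb.2.2 x hx, hb'.2.2 x hx]
  · rintro ht w S (⟨hn, h⟩ | ⟨Γ, hb, h⟩)
    · exact h w
    · refine h w fun B hB => ?_
      rcases hb.2.2 B hB with a | a
      · exact s_T w ht a
      · exact a.2.1
  · rintro h4 w S (⟨hn, h⟩ | ⟨Γ, hb, h⟩)
    · exact .inl ⟨hn, fun v => .inl ⟨hn, h⟩⟩
    · refine .inr ⟨Γ.map (fun B => if (true, Fm.box B) ∈ w.1 then Fm.box B else B),
        ⟨by simpa using hb.1, by simpa using hb.2.1, ?_⟩, fun v hv => .inr ⟨Γ, ⟨hb.1, hb.2.1, ?_⟩, h⟩⟩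
      · intro x hx
        obtain ⟨B, hB, rfl⟩ := Multiset.mem_map.1 hx
        split_ifs with e
        · exact .inr ⟨h4, e, B, rfl⟩
        · exact hb.2.2 B hB
      · intro B hB
        have := hv _ (Multiset.mem_map_of_mem _ hB)
        split_ifs at this with e
        · exact .inl this
        · rcases hb.2.2 B hB with a | a
          · exact absurd a e
          · exact .inr ⟨h4, this, a.2.2⟩

end LNSproof

/-- Soundness and completeness of the linear nested sequent calculus
`LNS_M𝒜ConW` for the monotone modal logic `M𝒜`, for every
`𝒜 ⊆ {C, N, P, D, T, 4}`: `A ∈ M𝒜` iff the linear nested sequent `⇒ A` is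
derivable in `LNS_M𝒜ConW`. -/
theorem LNSm_sound_complete (Ax : MAx) (h5 : Ax.five = false) (A : Fm) :
    MThm Ax A ↔ LM Ax ([(0, {A})], none) := by
  exact ⟨LNSproof.complete h5, LNSproof.sound' h5⟩
end

section
/- Let L be one of the logics M5, MP5, M45, MP45, MD45, K45, KD45. Then the linear nested sequent calculus LNS_LConW is sound and complete for L: for every formula A, A ∈ L if and only if the linear nested sequent ⇒ A is derivable in LNS_LConW. -/
/-- The additional axioms of the logic `M5`. -/
def axM5 : MAx := { five := true }
/-- The additional axioms of the logic `MP5`. -/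
def axMP5 : MAx := { p := true, five := true }
/-- The additional axioms of the logic `M45`. -/
def axM45 : MAx := { four := true, five := true }
/-- The additional axioms of the logic `MP45`. -/
def axMP45 : MAx := { p := true, four := true, five := true }
/-- The additional axioms of the logic `MD45`. -/
def axMD45 : MAx := { d := true, four := true, five := true }
/-- The additional axioms of the logic `K45 = MNC45`. -/
def axK45 : MAx := { c := true, n := true, four := true, five := true }
/-- The additional axioms of the logic `KD45 = MNCD45`. -/
def axKD45 : MAx := { c := true, n := true, d := true, four := true, five := true }

abbrev SF := Bool × Fm

def expn : SF → List (List SF)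
  | (_, .var _) => [[]]
  | (_, .box _) => [[]]
  | (true, .bot) => []
  | (false, .bot) => [[]]
  | (true, .top) => [[]]
  | (false, .top) => []
  | (b, .neg A) => [[(!b, A)]]
  | (true, .and A B) => [[(true, A), (true, B)]]
  | (false, .and A B) => [[(false, A)], [(false, B)]]
  | (true, .or A B) => [[(true, A)], [(true, B)]]
  | (false, .or A B) => [[(false, A), (false, B)]]
  | (true, .imp A B) => [[(true, B)], [(false, A)]]
  | (false, .imp A B) => [[(true, A), (false, B)]]

def atm : Fm → Prop
  | .var _ => True
  | .box _ => True
  | _ => False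

inductive DD (R : Set SF → Set SF → Prop) : Set SF → Prop
  | init {S m} : (true, Fm.var m) ∈ S → (false, Fm.var m) ∈ S → DD R S
  | prop {S s} : s ∈ S → (∀ b ∈ expn s, DD R (S ∪ {x | x ∈ b})) → DD R S
  | modal {P S} : R P S → DD R P → DD R S

def RMono (R : Set SF → Set SF → Prop) : Prop :=
  ∀ P S S2, R P S → (∀ b A, (b, Fm.box A) ∈ S → (b, Fm.box A) ∈ S2) → ∃ P2, P ⊆ P2 ∧ R P2 S2

section calc0
variable {R : Set SF → Set SF → Prop}

theorem DD.weak (hR : RMono R) {S : Set SF} (h : DD R S) : ∀ S2, S ⊆ S2 → DD R S2 := by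
  induction h with
  | init h1 h2 => intro S2 h; exact .init (h h1) (h h2)
  | prop h1 _ ih =>
    intro S2 h
    exact .prop (h h1) (fun b hb => ih b hb _ (Set.union_subset_union_left _ h))
  | modal h1 _ ih =>
    intro S2 h
    obtain ⟨P2, hp, hr⟩ := hR _ _ S2 h1 (fun b A hb => h hb)
    exact .modal hr (ih _ hp)

theorem DD.inv (hR : RMono R) {s : SF} (hs : ¬ atm s.2) {b : List SF} (hb : b ∈ expn s)
    {S1 : Set SF} (h : DD R S1) :
    ∀ S, S1 ⊆ insert s S → (∀ x ∈ b, x ∈ S) → DD R S := by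
  induction h with
  | @init S1 m h1 h2 =>
    intro S h hbS
    have k1 := h h1
    have k2 := h h2
    rcases k1 with k1 | k1
    · subst k1; exact absurd trivial hs
    rcases k2 with k2 | k2
    · subst k2; exact absurd trivial hs
    exact .init k1 k2
  | @prop S1 s' h1 _ ih =>
    intro S h hbS
    rcases h h1 with k | k
    · subst k
      apply ih b hb S _ hbS
      rintro x (hx | hx)
      · exact h hx
      · exact Or.inr (hbS x hx)
    · refine .prop k (fun b' hb' => ih b' hb' _ ?_ (fun x hx => Or.inl (hbS x hx)))
      rintro x (hx | hx)
      · rcases h hx with e | e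
        · exact Or.inl e
        · exact Or.inr (Or.inl e)
      · exact Or.inr (Or.inr hx)
  | @modal P S1 h1 hd ih =>
    intro S h hbS
    obtain ⟨P2, hp, hr⟩ := hR _ _ S h1 (by
      intro b A hb
      rcases h hb with e | e
      · subst e; exact absurd trivial hs
      · exact e)
    exact .modal hr (DD.weak hR hd _ hp)

theorem DD.inv' (hR : RMono R) {s : SF} (hs : ¬ atm s.2) {b : List SF} (hb : b ∈ expn s)
    {S : Set SF} (h : DD R (insert s S)) : DD R (S ∪ {x | x ∈ b}) := by
  refine DD.inv hR hs hb h _ ?_ (fun x hx => Or.inr hx)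
  exact Set.insert_subset_insert Set.subset_union_left

def ModCut (R : Set SF → Set SF → Prop) : Prop :=
  ∀ C, (∀ S, DD R (insert (true, C) S) → DD R (insert (false, C) S) → DD R S) →
  ∀ P1 S1 P2 S2, R P1 S1 → R P2 S2 → DD R P1 → DD R P2 →
  (∀ S2, DD R S2 → ∀ S, P1 ⊆ insert (false, Fm.box C) S → S2 ⊆ insert (true, Fm.box C) S → DD R S) →
  (∀ S1, R P1 S1 → ∀ S, S1 ⊆ insert (false, Fm.box C) S → P2 ⊆ insert (true, Fm.box C) S → DD R S) →
  ∀ S, S1 ⊆ insert (false, Fm.box C) S → S2 ⊆ insert (true, Fm.box C) S → DD R S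

theorem sub_aux {s : SF} {S1 S T : Set SF} (h : S1 ⊆ insert s S) : S1 ∪ T ⊆ insert s (S ∪ T) := by
  rintro x (hx | hx)
  · rcases h hx with e | e
    · exact Or.inl e
    · exact Or.inr (Or.inl e)
  · exact Or.inr (Or.inr hx)

theorem cutVar (hR : RMono R) {m : ℕ} {S1 : Set SF} (h : DD R S1) :
    ∀ S, S1 ⊆ insert (true, Fm.var m) S → DD R (insert (false, Fm.var m) S) → DD R S := by
  induction h with
  | @init S1 n h1 h2 =>
    intro S h hF
    have k2 : (false, Fm.var n) ∈ S := by
      rcases h h2 with e | e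
      · cases e
      · exact e
    rcases h h1 with e | e
    · cases e
      rwa [Set.insert_eq_of_mem k2] at hF
    · exact .init e k2
  | @prop S1 s' h1 _ ih =>
    intro S h hF
    rcases h h1 with k | k
    · subst k
      refine ih [] (by simp [expn]) S ?_ hF
      simpa using h
    · refine .prop k (fun b hb => ih b hb _ (sub_aux h) (hF.weak hR _ ?_))
      exact Set.insert_subset_insert Set.subset_union_left
  | @modal P S1 h1 hd ih =>
    intro S h hF
    obtain ⟨P2, hp, hr⟩ := hR _ _ S h1 (by
      intro b A hb
      rcases h hb with e | e
      · cases e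
      · exact e)
    exact .modal hr (DD.weak hR hd _ hp)

theorem cutBox (hR : RMono R) (hM : ModCut R) {C : Fm}
    (hC : ∀ S, DD R (insert (true, C) S) → DD R (insert (false, C) S) → DD R S)
    {S1 : Set SF} (h : DD R S1) :
    ∀ S2, DD R S2 → ∀ S, S1 ⊆ insert (false, Fm.box C) S → S2 ⊆ insert (true, Fm.box C) S →
      DD R S := by
  induction h with
  | @init S1 n h1 h2 =>
    intro S2 _ S h _
    rcases h h1 with e | k1
    · cases e
    rcases h h2 with e | k2
    · cases e
    exact .init k1 k2
  | @prop S1 s' h1 _ ih =>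
    intro S2 h2 S h h'
    rcases h h1 with k | k
    · subst k
      refine ih [] (by simp [expn]) S2 h2 S ?_ h'
      simpa using h
    · exact .prop k (fun b hb => ih b hb _ h2 _ (sub_aux h)
        (h'.trans (Set.insert_subset_insert Set.subset_union_left)))
  | @modal P1 S1 r1 hd ih =>
    intro S2 h2
    have key : ∀ S1, R P1 S1 → ∀ S, S1 ⊆ insert (false, Fm.box C) S →
        S2 ⊆ insert (true, Fm.box C) S → DD R S := by
      clear r1 S1
      induction h2 with
      | @init S2 n h1 h2 =>
        intro S1 _ S _ h
        rcases h h1 with e | k1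
        · cases e
        rcases h h2 with e | k2
        · cases e
        exact .init k1 k2
      | @prop S2 s' h1 _ ih2 =>
        intro S1 r1 S h h'
        rcases h' h1 with k | k
        · subst k
          refine ih2 [] (by simp [expn]) S1 r1 S h ?_
          simpa using h'
        · exact .prop k (fun b hb => ih2 b hb _ r1 _
            (h.trans (Set.insert_subset_insert Set.subset_union_left)) (sub_aux h'))
      | @modal P2 S2 r2 hd2 ih2 =>
        intro S1 r1 S h h'
        exact hM C hC P1 S1 P2 S2 r1 r2 hd hd2 ih ih2 S h h'
    exact key S1 r1

theorem DD.cut (hR : RMono R) (hM : ModCut R) (A : Fm) :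
    ∀ S, DD R (insert (true, A) S) → DD R (insert (false, A) S) → DD R S := by
  have eq1 : ∀ (S : Set SF) (a : SF), S ∪ {x | x ∈ [a]} = insert a S := by
    intro S a; ext x; simp [or_comm]
  have eq2 : ∀ (S : Set SF) (a b : SF), S ∪ {x | x ∈ [a, b]} = insert a (insert b S) := by
    intro S a b; ext x; simp; tauto
  have w : ∀ {S : Set SF} {a b : SF}, DD R (insert a S) → DD R (insert a (insert b S)) := by
    intro S a b h
    exact h.weak hR _ (Set.insert_subset_insert (Set.subset_insert _ _))
  induction A with
  | var m => intro S h1 h2; exact cutVar hR h1 S (le_refl _) h2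
  | bot =>
    intro S h1 h2
    have := DD.inv' hR (b := []) (by simp [atm]) (by simp [expn]) h2
    simpa using this
  | top =>
    intro S h1 h2
    have := DD.inv' hR (b := []) (by simp [atm]) (by simp [expn]) h1
    simpa using this
  | neg A ih =>
    intro S h1 h2
    have k1 := DD.inv' hR (b := [(false, A)]) (by simp [atm]) (by simp [expn]) h1
    have k2 := DD.inv' hR (b := [(true, A)]) (by simp [atm]) (by simp [expn]) h2
    rw [eq1] at k1 k2
    exact ih S k2 k1
  | and A B ihA ihB =>
    intro S h1 h2
    have k1 := DD.inv' hR (b := [(true, A), (true, B)]) (by simp [atm]) (by simp [expn]) h1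
    have k2 := DD.inv' hR (b := [(false, A)]) (by simp [atm]) (by simp [expn]) h2
    have k3 := DD.inv' hR (b := [(false, B)]) (by simp [atm]) (by simp [expn]) h2
    rw [eq2] at k1
    rw [eq1] at k2 k3
    rw [Set.insert_comm] at k1
    exact ihA S (ihB _ k1 (w k3)) k2
  | or A B ihA ihB =>
    intro S h1 h2
    have k1 := DD.inv' hR (b := [(false, A), (false, B)]) (by simp [atm]) (by simp [expn]) h2
    have k2 := DD.inv' hR (b := [(true, A)]) (by simp [atm]) (by simp [expn]) h1
    have k3 := DD.inv' hR (b := [(true, B)]) (by simp [atm]) (by simp [expn]) h1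
    rw [eq2] at k1
    rw [eq1] at k2 k3
    rw [Set.insert_comm] at k1
    exact ihA S k2 (ihB _ (w k3) k1)
  | imp A B ihA ihB =>
    intro S h1 h2
    have k1 := DD.inv' hR (b := [(true, A), (false, B)]) (by simp [atm]) (by simp [expn]) h2
    have k2 := DD.inv' hR (b := [(false, A)]) (by simp [atm]) (by simp [expn]) h1
    have k3 := DD.inv' hR (b := [(true, B)]) (by simp [atm]) (by simp [expn]) h1
    rw [eq2] at k1
    rw [eq1] at k2 k3
    rw [Set.insert_comm] at k1
    exact ihA S (ihB _ (w k3) k1) k2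
  | box C ih =>
    intro S h1 h2
    exact cutBox hR hM ih h2 _ h1 S (le_refl _) (le_refl _)

inductive KK (four : Bool) : SF → SF → Prop
  | tu A : KK four (true, A) (true, Fm.box A)
  | tk A : four = true → KK four (true, Fm.box A) (true, Fm.box A)
  | fk A : KK four (false, Fm.box A) (false, Fm.box A)

inductive RN (Ax : MAx) : Set SF → Set SF → Prop
  | foc {S B s t} : (false, Fm.box B) ∈ S → t ∈ S → KK Ax.four s t → RN Ax {(false, B), s} S
  | d {S s1 s2 t1 t2} : Ax.d = true → t1 ∈ S → t2 ∈ S → KK Ax.four s1 t1 → KK Ax.four s2 t2 →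
      RN Ax {s1, s2} S
  | p {S A} : Ax.p = true → (true, Fm.box A) ∈ S → RN Ax {(true, A)} S

theorem KK.bx {f s t} (h : KK f s t) : ∃ b A, t = (b, Fm.box A) := by
  cases h <;> exact ⟨_, _, rfl⟩

theorem KK.refl {s t} (h : KK true s t) : KK true t t := by
  cases h
  · exact .tk _ rfl
  · exact .tk _ rfl
  · exact .fk _

theorem RN.mono (Ax : MAx) : RMono (RN Ax) := by
  intro P S S2 h hS
  refine ⟨P, le_refl _, ?_⟩
  cases h with
  | foc h1 h2 h3 =>
    obtain ⟨b, A, rfl⟩ := h3.bx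
    exact .foc (hS _ _ h1) (hS _ _ h2) h3
  | d hd h1 h2 h3 h4 =>
    obtain ⟨b, A, rfl⟩ := h3.bx
    obtain ⟨b, A, rfl⟩ := h4.bx
    exact .d hd (hS _ _ h1) (hS _ _ h2) h3 h4
  | p hp h1 => exact .p hp (hS _ _ h1)

/-- residue of a right rule -/
theorem RN.residue {Ax : MAx} (hd4 : Ax.d = true → Ax.four = true) {C P2 S2 S}
    (r : RN Ax P2 S2) (hP : DD (RN Ax) P2) (hS : S2 ⊆ insert (true, Fm.box C) S) :
    DD (RN Ax) S ∨ (∃ q ∈ S, KK Ax.four q q ∧ DD (RN Ax) {(true, Fm.box C), q}) ∨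
      DD (RN Ax) {(true, Fm.box C)} := by
  have hR := RN.mono Ax
  cases r with
  | @foc _ B s t h1 h2 h3 =>
    have k1 : (false, Fm.box B) ∈ S := by
      rcases hS h1 with e | e
      · cases e
      · exact e
    rcases hS h2 with e | e
    · subst e
      exact Or.inr (Or.inl ⟨_, k1, .fk _, .modal (.foc (by simp) (by simp) h3) hP⟩)
    · exact Or.inl (.modal (.foc k1 e h3) hP)
  | @d _ s1 s2 t1 t2 hd h1 h2 h3 h4 =>
    have hf := hd4 hd
    rcases hS h1 with e1 | e1 <;> rcases hS h2 with e2 | e2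
    · subst e1; subst e2
      exact Or.inr (Or.inr (.modal (.d hd (by simp) (by simp) h3 h4) hP))
    · subst e1
      exact Or.inr (Or.inl ⟨_, e2, by rw [hf] at h4 ⊢; exact h4.refl,
        .modal (.d hd (by simp) (by simp) h3 h4) hP⟩)
    · subst e2
      exact Or.inr (Or.inl ⟨_, e1, by rw [hf] at h3 ⊢; exact h3.refl,
        .modal (.d hd (by simp) (by simp) h3 h4) hP⟩)
    · exact Or.inl (.modal (.d hd e1 e2 h3 h4) hP)
  | @p _ A hp h1 =>
    rcases hS h1 with e | e
    · cases e
      exact Or.inr (Or.inr (.modal (.p hp (by simp)) hP))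
    · exact Or.inl (.modal (.p hp e) hP)

theorem RN.cut_d {Ax : MAx} (hd : Ax.d = true) {C : Fm}
    {s t : SF} {S : Set SF}
    (hres : (∃ q ∈ S, KK Ax.four q q ∧ DD (RN Ax) {(true, Fm.box C), q}) ∨
      DD (RN Ax) {(true, Fm.box C)}) (hK : KK Ax.four s t) (ht : t ∈ S)
    (hl : ∀ S2, DD (RN Ax) S2 → ∀ S, {(false, Fm.box C), s} ⊆ insert (false, Fm.box C) S →
      S2 ⊆ insert (true, Fm.box C) S → DD (RN Ax) S) : DD (RN Ax) S := by
  rcases hres with ⟨q, hq, kq, dq⟩ | dq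
  · exact .modal (.d hd ht hq hK kq) (hl _ dq {s, q} (by simp [Set.insert_subset_iff])
      (by simp [Set.insert_subset_iff]))
  · exact .modal (.d hd ht ht hK hK) (hl _ dq {s, s} (by simp [Set.insert_subset_iff])
      (by simp [Set.insert_subset_iff]))

theorem RN.modCut (Ax : MAx) (hd4 : Ax.d = true → Ax.four = true) : ModCut (RN Ax) := by
  intro C hC P1 S1 P2 S2 r1 r2 d1 d2 hl hr S hS1 hS2
  have hR := RN.mono Ax
  rcases r2.residue hd4 d2 hS2 with h | hres
  · exact h
  cases r1 with
  | @p _ A hp h1 =>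
    rcases hS1 h1 with e | e
    · cases e
    · exact .modal (.p hp e) d1
  | @d _ s1 s2 t1 t2 hd h1 h2 h3 h4 =>
    rcases hS1 h1 with e1 | e1 <;> rcases hS1 h2 with e2 | e2
    · subst e1; subst e2; cases h3; cases h4
      rcases hres with ⟨q, hq, kq, dq⟩ | dq
      · refine (hl _ dq {q} ?_ ?_).weak hR S (by simpa using hq) <;> simp [Set.insert_subset_iff]
      · refine (hl _ dq {} ?_ ?_).weak hR S (by simp) <;> simp [Set.insert_subset_iff]
    · subst e1; cases h3
      exact RN.cut_d hd hres h4 e2 hl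
    · subst e2; cases h4
      rw [Set.pair_comm] at hl
      exact RN.cut_d hd hres h3 e1 hl
    · exact .modal (.d hd e1 e2 h3 h4) d1
  | @foc _ B s t h1 h2 h3 =>
    by_cases hB : B = C
    swap
    · have k1 : (false, Fm.box B) ∈ S := by
        rcases hS1 h1 with e | e
        · cases e; exact absurd rfl hB
        · exact e
      rcases hS1 h2 with e | e
      swap
      · exact .modal (.foc k1 e h3) d1
      subst e; cases h3
      rcases hres with ⟨q, hq, kq, dq⟩ | dq
      · refine .modal (.foc k1 hq kq) (hl _ dq _ ?_ ?_) <;> simp [Set.insert_subset_iff]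
      · refine .modal (.foc k1 k1 (.fk _)) (hl _ dq _ ?_ ?_) <;> simp [Set.insert_subset_iff]
    subst hB
    -- the left rule: either genuine second slot in S, or duplicate
    have L : (t ∈ S) ∨ (s = (false, Fm.box B) ∧ t = (false, Fm.box B)) := by
      rcases hS1 h2 with e | e
      · subst e; cases h3; exact Or.inr ⟨rfl, rfl⟩
      · exact Or.inl e
    clear h1 h2 hS1
    -- cut of left conclusion against the right premise
    have hr' : ∀ S, t ∈ S ∨ t = (false, Fm.box B) → P2 ⊆ insert (true, Fm.box B) S →
        DD (RN Ax) S := by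
      intro S hS hP
      refine hr {(false, Fm.box B), t} (.foc (by simp) (by simp) h3) S ?_ hP
      rintro x (hx | hx)
      · exact Or.inl hx
      · cases hx
        rcases hS with e | e
        · exact Or.inr e
        · exact Or.inl e
    cases r2 with
    | @p _ A hp g1 =>
      rcases hS2 g1 with e | e
      swap
      · exact .modal (.p hp e) d2
      cases e
      rcases L with L | ⟨rfl, rfl⟩
      · have : DD (RN Ax) {s} := by
          apply hC
          · exact d2.weak hR _ (by simp [Set.insert_subset_iff])
          · exact d1
        cases h3 with
        | tu A => exact .modal (.p hp L) this
        | tk A _ => exact this.weak hR _ (by simpa using L)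
        | fk A => exact this.weak hR _ (by simpa using L)
      · have k : DD (RN Ax) {(false, B)} :=
          hl {(true, Fm.box B)} (.modal (.p hp (by simp)) d2) _ (by simp [Set.insert_subset_iff])
            (by simp)
        have : DD (RN Ax) {} := hC _ (by simpa using d2) (by simpa using k)
        exact this.weak hR _ (by simp)
    | @foc _ B' s' t' g1 g2 g3 =>
      have k1 : (false, Fm.box B') ∈ S := by
        rcases hS2 g1 with e | e
        · cases e
        · exact e
      rcases hS2 g2 with e | e
      swap
      · exact .modal (.foc k1 e g3) d2
      subst e
      cases g3 with
      | tk _ hf =>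
        rw [hf] at h3
        rcases L with L | ⟨rfl, rfl⟩
        · refine .modal (.foc k1 L (by rw [hf]; exact h3.refl)) (hr' _ (by simp) ?_)
          simp [Set.insert_subset_iff]
        · refine .modal (.foc k1 k1 (.fk _)) (hr' _ (by simp) ?_)
          simp [Set.insert_subset_iff]
      | tu _ =>
        rcases L with L | ⟨rfl, rfl⟩
        · refine .modal (.foc k1 L h3) (hC _ (d2.weak hR _ ?_) (d1.weak hR _ ?_)) <;>
            simp [Set.insert_subset_iff]
        · have k : DD (RN Ax) {(false, B), (false, Fm.box B')} :=
            hl {(false, Fm.box B'), (true, Fm.box B)}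
              (.modal (.foc (by simp) (t := (true, Fm.box B)) (by simp) (.tu _)) d2) _ (by simp [Set.insert_subset_iff])
              (by simp [Set.insert_subset_iff])
          refine .modal (.foc k1 k1 (.fk _)) (hC _ (d2.weak hR _ ?_) (k.weak hR _ ?_)) <;>
            simp [Set.insert_subset_iff]
    | @d _ s1 s2 t1 t2 hd g1 g2 g3 g4 =>
      have hf := hd4 hd
      have ht : KK Ax.four t t := by rw [hf] at h3 ⊢; exact h3.refl
      -- one of the two slots is cut
      have one : ∀ s' t' u, ({s1, s2} : Set SF) = {u, s'} → t' ∈ S → KK Ax.four s' t' →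
          KK Ax.four u (true, Fm.box B) → DD (RN Ax) S := by
        intro s' t' u e ht' ks ku
        rw [e] at d2 hr'
        cases ku with
        | tk _ _ =>
          rcases L with L | ⟨rfl, rfl⟩
          · refine .modal (.d hd L ht' ht ks) (hr' _ (by simp) ?_)
            simp [Set.insert_subset_iff]
          · refine .modal (.d hd ht' ht' ks ks) (hr' _ (by simp) ?_)
            simp
        | tu _ =>
          rcases L with L | ⟨rfl, rfl⟩
          · refine .modal (.d hd L ht' h3 ks) (hC _ (d2.weak hR _ ?_) (d1.weak hR _ ?_)) <;>
              simp [Set.insert_subset_iff]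
          · have k : DD (RN Ax) {(false, B), t'} :=
              hl {(true, Fm.box B), t'}
                (.modal (.d hd (t1 := (true, Fm.box B)) (by simp) (t2 := t') (by simp) (.tu _) ks) d2) _
                (by simp [Set.insert_subset_iff])
                (by simp [Set.insert_subset_iff])
            have kt : KK Ax.four t' t' := by rw [hf] at ks ⊢; exact ks.refl
            refine .modal (.d hd ht' ht' kt ks) (hC _ (d2.weak hR _ ?_) (k.weak hR _ ?_)) <;>
              simp [Set.insert_subset_iff]
      rcases hS2 g1 with e1 | e1 <;> rcases hS2 g2 with e2 | e2
      · subst e1; subst e2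
        have k0 : ∀ u, KK Ax.four u (true, Fm.box B) → u = (true, B) ∨ u = (true, Fm.box B) := by
          intro u hu
          cases hu <;> simp
        have k1 : ∀ S : Set SF, (true, B) ∈ S → ({s1, s2} : Set SF) ⊆ insert (true, Fm.box B) S := by
          rintro S hS x (hx | hx)
          · rcases k0 _ g3 with e | e <;> subst hx <;> subst e <;> simp [hS]
          · cases hx
            rcases k0 _ g4 with e | e <;> subst e <;> simp [hS]
        rcases L with L | ⟨rfl, rfl⟩
        · have k2 := hr' {(true, B), t, s} (by simp) (k1 _ (by simp))
          refine .modal (.d hd L L ht h3) (hC _ k2 (d1.weak hR _ ?_))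
          simp [Set.insert_subset_iff]
        · have k2 := hr' {(true, B)} (by simp) (k1 _ (by simp))
          have k3 : DD (RN Ax) {(false, B)} :=
            hl {(true, Fm.box B)} (.modal (.d hd (by simp) (by simp) g3 g4) d2) _
              (by simp [Set.insert_subset_iff]) (by simp)
          have : DD (RN Ax) {} := hC _ (by simpa using k2) (by simpa using k3)
          exact this.weak hR _ (by simp)
      · subst e1
        exact one s2 t2 s1 rfl e2 g4 g3
      · subst e2
        exact one s1 t1 s2 (Set.pair_comm _ _) e1 g3 g4
      · exact .modal (.d hd e1 e2 g3 g4) d2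

def prem (S : Set SF) : Set SF :=
  {x | (x.1 = true ∧ (true, Fm.box x.2) ∈ S) ∨ ((∃ A, x.2 = Fm.box A) ∧ x ∈ S)}

def bxs (S : Set SF) : Set SF := {x | (∃ A, x.2 = Fm.box A) ∧ x ∈ S}

inductive RC (Ax : MAx) : Set SF → Set SF → Prop
  | k {S B} : (false, Fm.box B) ∈ S → RC Ax (insert (false, B) (prem S)) S
  | d {S} : Ax.d = true → RC Ax (prem S) S

theorem prem_mono {S S2 : Set SF} (h : ∀ b A, (b, Fm.box A) ∈ S → (b, Fm.box A) ∈ S2) :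
    prem S ⊆ prem S2 := by
  rintro ⟨b, x⟩ (⟨hx, h2⟩ | ⟨⟨A, hA⟩, h2⟩)
  · exact Or.inl ⟨hx, h _ _ h2⟩
  · cases hA; exact Or.inr ⟨⟨A, rfl⟩, h _ _ h2⟩

theorem prem_bxs (S : Set SF) : prem (bxs S) = prem S := by
  apply le_antisymm
  · exact prem_mono (fun b A h => h.2)
  · exact prem_mono (fun b A h => ⟨⟨A, rfl⟩, h⟩)

theorem RC.mono (Ax : MAx) : RMono (RC Ax) := by
  intro P S S2 h hS
  cases h with
  | k h => exact ⟨_, Set.insert_subset_insert (prem_mono hS), .k (hS _ _ h)⟩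
  | d h => exact ⟨_, prem_mono hS, .d h⟩

theorem RC.toBxs {Ax P S} (h : RC Ax P S) : RC Ax P (bxs S) := by
  cases h with
  | k h => rw [← prem_bxs]; exact .k ⟨⟨_, rfl⟩, h⟩
  | d h => rw [← prem_bxs]; exact .d h

theorem prem_sub {S1 S : Set SF} {b C} (h : S1 ⊆ insert (b, Fm.box C) S) :
    prem S1 ⊆ insert (b, Fm.box C) (if b = true then insert (true, C) (prem S) else prem S) := by
  rintro ⟨b', x⟩ (⟨hx, h2⟩ | ⟨⟨A, hA⟩, h2⟩)
  · rcases h h2 with e | e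
    · cases e; cases hx; simp
    · right
      have : (b', x) ∈ prem S := Or.inl ⟨hx, e⟩
      split_ifs
      · exact Or.inr this
      · exact this
  · rcases h h2 with e | e
    · exact Or.inl e
    · right
      have : (b', x) ∈ prem S := Or.inr ⟨⟨A, hA⟩, e⟩
      split_ifs
      · exact Or.inr this
      · exact this

theorem bxs_sub {S1 S : Set SF} {s} (h : S1 ⊆ insert s S) : bxs S1 ⊆ insert s (prem S) := by
  rintro x ⟨hA, hx⟩
  rcases h hx with e | e
  · exact Or.inl e
  · exact Or.inr (Or.inr ⟨hA, e⟩)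

theorem RC.modCut (Ax : MAx) : ModCut (RC Ax) := by
  intro C hC P1 S1 P2 S2 r1 r2 d1 d2 hl hr S hS1 hS2
  have hR := RC.mono Ax
  have q1 := prem_sub hS1
  have q2 := prem_sub hS2
  simp only [Bool.false_eq_true, if_false, if_true] at q1 q2
  have b1 := bxs_sub hS1
  have b2 := bxs_sub hS2
  have e2 : DD (RC Ax) (bxs S2) := .modal r2.toBxs d2
  have r1' := r1.toBxs
  have w : ∀ {a b : SF} {T : Set SF}, T ⊆ insert a (prem S) → T ⊆ insert a (insert b (prem S)) :=
    fun h => h.trans (Set.insert_subset_insert (Set.subset_insert _ _))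
  have w2 : ∀ {a b : SF} {T U : Set SF}, T ⊆ insert a U → insert b T ⊆ insert a (insert b U) := by
    intro a b T U h
    rw [Set.insert_comm]
    exact Set.insert_subset_insert h
  cases r1 with
  | d hd => exact .modal (.d hd) (hl _ e2 _ q1 b2)
  | @k _ B h1 =>
    have s1 : DD (RC Ax) (insert (false, B) (prem S)) := hl _ e2 _ (w2 q1) (w b2)
    rcases hS1 h1 with e | e
    swap
    · exact .modal (.k e) s1
    cases e
    cases r2 with
    | d hd =>
      refine .modal (.d hd) (hC _ ?_ s1)
      exact hr _ r1' _ (w b1) q2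
    | @k _ B2 h2 =>
      have k2 : (false, Fm.box B2) ∈ S := by
        rcases hS2 h2 with e | e
        · cases e
        · exact e
      refine .modal (.k k2) (hC _ ?_ (s1.weak hR _ (Set.insert_subset_insert (Set.subset_insert _ _))))
      have := hr _ r1' (insert (false, B2) (insert (true, C) (prem S)))
        ((w b1).trans (Set.insert_subset_insert (Set.subset_insert _ _))) (w2 q2)
      rwa [Set.insert_comm] at this

theorem DD.init' (hmono : ∀ A B S, DD R {(true, A), (false, B)} → (true, Fm.box A) ∈ S →
    (false, Fm.box B) ∈ S → DD R S) (A : Fm) :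
    ∀ S, (true, A) ∈ S → (false, A) ∈ S → DD R S := by
  induction A with
  | var m => intro S h1 h2; exact .init h1 h2
  | bot => intro S h1 h2; exact .prop h1 (by simp [expn])
  | top => intro S h1 h2; exact .prop h2 (by simp [expn])
  | neg A ih =>
    intro S h1 h2
    refine .prop h1 ?_
    simp only [expn, List.mem_singleton, forall_eq]
    refine .prop (Or.inl h2) ?_
    simp only [expn, List.mem_singleton, forall_eq]
    apply ih <;> simp
  | and A B ihA ihB =>
    intro S h1 h2
    refine .prop h1 ?_
    simp only [expn, List.mem_singleton, forall_eq]
    refine .prop (Or.inl h2) ?_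
    simp only [expn, List.mem_cons, List.not_mem_nil, or_false, forall_eq_or_imp, forall_eq]
    constructor
    · apply ihA <;> simp
    · apply ihB <;> simp
  | or A B ihA ihB =>
    intro S h1 h2
    refine .prop h2 ?_
    simp only [expn, List.mem_singleton, forall_eq]
    refine .prop (Or.inl h1) ?_
    simp only [expn, List.mem_cons, List.not_mem_nil, or_false, forall_eq_or_imp, forall_eq]
    constructor
    · apply ihA <;> simp
    · apply ihB <;> simp
  | imp A B ihA ihB =>
    intro S h1 h2
    refine .prop h2 ?_
    simp only [expn, List.mem_singleton, forall_eq]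
    refine .prop (Or.inl h1) ?_
    simp only [expn, List.mem_cons, List.not_mem_nil, or_false, forall_eq_or_imp, forall_eq]
    constructor
    · apply ihB <;> simp
    · apply ihA <;> simp
  | box A ih =>
    intro S h1 h2
    exact hmono A A S (ih _ (by simp) (by simp)) h1 h2

def ats : Fm → List Fm
  | .var n => [.var n]
  | .box A => [.box A]
  | .bot => []
  | .top => []
  | .neg A => ats A
  | .and A B => ats A ++ ats B
  | .or A B => ats A ++ ats B
  | .imp A B => ats A ++ ats B

theorem kalmar (hinit : ∀ A S, (true, A) ∈ S → (false, A) ∈ S → DD R S) (v : Fm → Prop) (A : Fm) :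
    ∀ S, (∀ a ∈ ats A, (v a → (true, a) ∈ S) ∧ (¬ v a → (false, a) ∈ S)) →
      (evalP v A → (false, A) ∈ S → DD R S) ∧ (¬ evalP v A → (true, A) ∈ S → DD R S) := by
  induction A with
  | var m =>
    intro S h
    have := h (.var m) (by simp [ats])
    exact ⟨fun h1 h2 => hinit _ _ (this.1 h1) h2, fun h1 h2 => hinit _ _ h2 (this.2 h1)⟩
  | box A _ =>
    intro S h
    have := h (.box A) (by simp [ats])
    exact ⟨fun h1 h2 => hinit _ _ (this.1 h1) h2, fun h1 h2 => hinit _ _ h2 (this.2 h1)⟩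
  | bot =>
    intro S h
    exact ⟨fun h => h.elim, fun _ h1 => .prop h1 (by simp [expn])⟩
  | top =>
    intro S h
    exact ⟨fun _ h1 => .prop h1 (by simp [expn]), fun h => (h trivial).elim⟩
  | neg A ih =>
    intro S h
    have key : ∀ T, ∀ a ∈ ats A, (v a → (true, a) ∈ S ∪ T) ∧ (¬ v a → (false, a) ∈ S ∪ T) :=
      fun T a ha => ⟨fun k => Or.inl ((h a ha).1 k), fun k => Or.inl ((h a ha).2 k)⟩
    constructor
    · intro h1 h2
      refine .prop h2 ?_
      simp only [expn, List.mem_singleton, forall_eq]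
      exact (ih _ (key _)).2 h1 (by simp)
    · intro h1 h2
      refine .prop h2 ?_
      simp only [expn, List.mem_singleton, forall_eq]
      exact (ih _ (key _)).1 (not_not.mp h1) (by simp)
  | and A B ihA ihB =>
    intro S h
    have kA : ∀ T, ∀ a ∈ ats A, (v a → (true, a) ∈ S ∪ T) ∧ (¬ v a → (false, a) ∈ S ∪ T) :=
      fun T a ha => ⟨fun k => Or.inl ((h a (by simp [ats, ha])).1 k), fun k => Or.inl ((h a (by simp [ats, ha])).2 k)⟩
    have kB : ∀ T, ∀ a ∈ ats B, (v a → (true, a) ∈ S ∪ T) ∧ (¬ v a → (false, a) ∈ S ∪ T) :=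
      fun T a ha => ⟨fun k => Or.inl ((h a (by simp [ats, ha])).1 k), fun k => Or.inl ((h a (by simp [ats, ha])).2 k)⟩
    constructor
    · intro h1 h2
      refine .prop h2 ?_
      simp only [expn, List.mem_cons, List.not_mem_nil, or_false, forall_eq_or_imp, forall_eq]
      exact ⟨(ihA _ (kA _)).1 h1.1 (by simp), (ihB _ (kB _)).1 h1.2 (by simp)⟩
    · intro h1 h2
      refine .prop h2 ?_
      simp only [expn, List.mem_singleton, forall_eq]
      by_cases hA : evalP v A
      · exact (ihB _ (kB _)).2 (fun hB => h1 ⟨hA, hB⟩) (by simp)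
      · exact (ihA _ (kA _)).2 hA (by simp)
  | or A B ihA ihB =>
    intro S h
    have kA : ∀ T, ∀ a ∈ ats A, (v a → (true, a) ∈ S ∪ T) ∧ (¬ v a → (false, a) ∈ S ∪ T) :=
      fun T a ha => ⟨fun k => Or.inl ((h a (by simp [ats, ha])).1 k), fun k => Or.inl ((h a (by simp [ats, ha])).2 k)⟩
    have kB : ∀ T, ∀ a ∈ ats B, (v a → (true, a) ∈ S ∪ T) ∧ (¬ v a → (false, a) ∈ S ∪ T) :=
      fun T a ha => ⟨fun k => Or.inl ((h a (by simp [ats, ha])).1 k), fun k => Or.inl ((h a (by simp [ats, ha])).2 k)⟩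
    constructor
    · intro h1 h2
      refine .prop h2 ?_
      simp only [expn, List.mem_singleton, forall_eq]
      rcases h1 with h1 | h1
      · exact (ihA _ (kA _)).1 h1 (by simp)
      · exact (ihB _ (kB _)).1 h1 (by simp)
    · intro h1 h2
      refine .prop h2 ?_
      simp only [expn, List.mem_cons, List.not_mem_nil, or_false, forall_eq_or_imp, forall_eq]
      exact ⟨(ihA _ (kA _)).2 (fun k => h1 (Or.inl k)) (by simp),
        (ihB _ (kB _)).2 (fun k => h1 (Or.inr k)) (by simp)⟩
  | imp A B ihA ihB =>
    intro S h
    have kA : ∀ T, ∀ a ∈ ats A, (v a → (true, a) ∈ S ∪ T) ∧ (¬ v a → (false, a) ∈ S ∪ T) :=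
      fun T a ha => ⟨fun k => Or.inl ((h a (by simp [ats, ha])).1 k), fun k => Or.inl ((h a (by simp [ats, ha])).2 k)⟩
    have kB : ∀ T, ∀ a ∈ ats B, (v a → (true, a) ∈ S ∪ T) ∧ (¬ v a → (false, a) ∈ S ∪ T) :=
      fun T a ha => ⟨fun k => Or.inl ((h a (by simp [ats, ha])).1 k), fun k => Or.inl ((h a (by simp [ats, ha])).2 k)⟩
    constructor
    · intro h1 h2
      refine .prop h2 ?_
      simp only [expn, List.mem_singleton, forall_eq]
      by_cases hA : evalP v A
      · exact (ihB _ (kB _)).1 (h1 hA) (by simp)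
      · exact (ihA _ (kA _)).2 hA (by simp)
    · intro h1 h2
      refine .prop h2 ?_
      simp only [expn, List.mem_cons, List.not_mem_nil, or_false, forall_eq_or_imp, forall_eq]
      exact ⟨(ihB _ (kB _)).2 (fun k => h1 (fun _ => k)) (by simp),
        (ihA _ (kA _)).1 (by by_contra k; exact h1 (fun k' => absurd k' k)) (by simp)⟩

theorem DD.taut (hR : RMono R) (hM : ModCut R)
    (hinit : ∀ A S, (true, A) ∈ S → (false, A) ∈ S → DD R S) {A : Fm} (hA : Taut A)
    (l : List Fm) : ∀ S, (false, A) ∈ S →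
      (∀ a ∈ ats A, a ∈ l ∨ (true, a) ∈ S ∨ (false, a) ∈ S) → DD R S := by
  induction l with
  | nil =>
    intro S hS h
    refine (kalmar hinit (fun a => (true, a) ∈ S) A S ?_).1 (hA _) hS
    intro a ha
    refine ⟨id, fun k => ?_⟩
    rcases h a ha with e | e | e
    · cases e
    · exact absurd e k
    · exact e
  | cons c l ih =>
    intro S hS h
    apply DD.cut hR hM c
    · apply ih _ (Or.inr hS)
      intro a ha
      rcases h a ha with e | e | e
      · rcases List.mem_cons.mp e with rfl | e
        · exact Or.inr (Or.inl (Or.inl rfl))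
        · exact Or.inl e
      · exact Or.inr (Or.inl (Or.inr e))
      · exact Or.inr (Or.inr (Or.inr e))
    · apply ih _ (Or.inr hS)
      intro a ha
      rcases h a ha with e | e | e
      · rcases List.mem_cons.mp e with rfl | e
        · exact Or.inr (Or.inr (Or.inl rfl))
        · exact Or.inl e
      · exact Or.inr (Or.inl (Or.inr e))
      · exact Or.inr (Or.inr (Or.inr e))

theorem DD.imp_inv (hR : RMono R) {A B : Fm} (h : DD R {(false, Fm.imp A B)}) :
    DD R {(true, A), (false, B)} := by
  have := DD.inv (R := R) hR (s := (false, Fm.imp A B)) (b := [(true, A), (false, B)])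
    (by simp [atm]) (by simp [expn]) h
  apply this <;> simp

theorem MThm.toDD {Ax : MAx} (hR : RMono R) (hM : ModCut R)
    (hmono : ∀ A B S, DD R {(true, A), (false, B)} → (true, Fm.box A) ∈ S →
      (false, Fm.box B) ∈ S → DD R S)
    (hc : ∀ A B S, Ax.c = true → (true, Fm.box A) ∈ S → (true, Fm.box B) ∈ S →
      (false, Fm.box (.and A B)) ∈ S → DD R S)
    (hn : Ax.n = true → DD R {(false, Fm.box .top)})
    (hp : ∀ S, Ax.p = true → (true, Fm.box .bot) ∈ S → DD R S)
    (hd : ∀ A S, Ax.d = true → (true, Fm.box A) ∈ S → (true, Fm.box (.neg A)) ∈ S → DD R S)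
    (ht : Ax.t = false)
    (h4 : ∀ A S, Ax.four = true → (true, Fm.box A) ∈ S → (false, Fm.box (.box A)) ∈ S → DD R S)
    (h5 : ∀ A S, Ax.five = true → (false, Fm.box A) ∈ S → (false, Fm.box (.neg (.box A))) ∈ S → DD R S)
    {A : Fm} (h : MThm Ax A) : DD R {(false, A)} := by
  have hinit := DD.init' hmono
  have impR : ∀ A B, DD R {(true, A), (false, B)} → DD R {(false, Fm.imp A B)} := by
    intro A B h
    refine .prop (Set.mem_singleton _) ?_
    simp only [expn, List.mem_singleton, forall_eq]
    refine h.weak hR _ ?_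
    rintro x (rfl | rfl) <;> simp
  induction h with
  | taut h => exact DD.taut hR hM hinit h _ _ (by simp) (fun a ha => Or.inl ha)
  | @mp A B _ _ ih1 ih2 =>
    apply DD.cut hR hM A
    · exact DD.imp_inv hR ih1
    · exact ih2.weak hR _ (by simp)
  | cong _ _ ih1 ih2 =>
    exact impR _ _ (hmono _ _ _ (DD.imp_inv hR ih1) (by simp) (by simp))
  | @axM A B =>
    apply impR
    refine .prop (s := (false, Fm.and (.box A) (.box B))) (by simp) ?_
    simp only [expn, List.mem_cons, List.not_mem_nil, or_false, forall_eq_or_imp, forall_eq]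
    constructor
    · refine hmono (.and A B) A _ ?_ (by simp) (by simp)
      refine .prop (s := (true, Fm.and A B)) (by simp) ?_
      simp only [expn, List.mem_singleton, forall_eq]
      apply hinit A <;> simp
    · refine hmono (.and A B) B _ ?_ (by simp) (by simp)
      refine .prop (s := (true, Fm.and A B)) (by simp) ?_
      simp only [expn, List.mem_singleton, forall_eq]
      apply hinit B <;> simp
  | @axC A B h =>
    apply impR
    refine .prop (s := (true, Fm.and (.box A) (.box B))) (by simp) ?_
    simp only [expn, List.mem_singleton, forall_eq]
    apply hc A B _ h <;> simp
  | axN h => exact hn h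
  | axP h =>
    refine .prop (Set.mem_singleton _) ?_
    simp only [expn, List.mem_singleton, forall_eq]
    apply hp _ h; simp
  | @axD A h =>
    refine .prop (Set.mem_singleton _) ?_
    simp only [expn, List.mem_singleton, forall_eq]
    refine .prop (s := (true, Fm.and (.box A) (.box (.neg A)))) (by simp) ?_
    simp only [expn, List.mem_singleton, forall_eq]
    apply hd A _ h <;> simp
  | axT h => rw [ht] at h; cases h
  | @ax4 A h =>
    apply impR
    apply h4 A _ h <;> simp
  | @ax5 A h =>
    refine .prop (Set.mem_singleton _) ?_
    simp only [expn, List.mem_singleton, forall_eq]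
    apply h5 A _ h <;> simp

theorem toDD_RN {Ax : MAx} (hd4 : Ax.d = true → Ax.four = true) (hc : Ax.c = false)
    (hn : Ax.n = false) (ht : Ax.t = false) {A : Fm} (h : MThm Ax A) :
    DD (RN Ax) {(false, A)} := by
  have hmono : ∀ A B S, DD (RN Ax) {(true, A), (false, B)} → (true, Fm.box A) ∈ S →
      (false, Fm.box B) ∈ S → DD (RN Ax) S := by
    intro A B S h h1 h2
    rw [Set.pair_comm] at h
    exact .modal (.foc h2 h1 (.tu _)) h
  have hinit := DD.init' hmono
  refine MThm.toDD (RN.mono Ax) (RN.modCut Ax hd4) hmono ?_ ?_ ?_ ?_ ht ?_ ?_ h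
  · intro _ _ _ h; simp [hc] at h
  · intro h; simp [hn] at h
  · intro S hp h1
    exact .modal (.p hp h1) (.prop (s := (true, Fm.bot)) (by simp) (by simp [expn]))
  · intro A S hd h1 h2
    refine .modal (.d hd h1 h2 (.tu _) (.tu _)) (.prop (s := (true, Fm.neg A)) (by simp) ?_)
    simp only [expn, List.mem_singleton, forall_eq]
    apply hinit A <;> simp
  · intro A S hf h1 h2
    exact .modal (.foc h2 h1 (.tk _ hf)) (hinit (.box A) _ (by simp) (by simp))
  · intro A S hf h1 h2
    refine .modal (.foc h2 h1 (.fk _)) (.prop (s := (false, Fm.neg (.box A))) (by simp) ?_)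
    simp only [expn, List.mem_singleton, forall_eq]
    apply hinit (.box A) <;> simp

theorem toDD_RC {Ax : MAx} (hp : Ax.p = false) (ht : Ax.t = false) {A : Fm} (h : MThm Ax A) :
    DD (RC Ax) {(false, A)} := by
  have pu : ∀ {A S}, (true, Fm.box A) ∈ S → (true, A) ∈ prem S := fun h => Or.inl ⟨rfl, h⟩
  have pb : ∀ {b A S}, (b, Fm.box A) ∈ S → (b, Fm.box A) ∈ prem S := fun h => Or.inr ⟨⟨_, rfl⟩, h⟩
  have hmono : ∀ A B S, DD (RC Ax) {(true, A), (false, B)} → (true, Fm.box A) ∈ S →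
      (false, Fm.box B) ∈ S → DD (RC Ax) S := by
    intro A B S h h1 h2
    refine .modal (.k h2) (h.weak (RC.mono Ax) _ ?_)
    rintro x (rfl | rfl)
    · exact Or.inr (pu h1)
    · exact Or.inl rfl
  have hinit := DD.init' hmono
  refine MThm.toDD (RC.mono Ax) (RC.modCut Ax) hmono ?_ ?_ ?_ ?_ ht ?_ ?_ h
  · intro A B S _ h1 h2 h3
    refine .modal (.k h3) (.prop (s := (false, Fm.and A B)) (by simp) ?_)
    simp only [expn, List.mem_cons, List.not_mem_nil, or_false, forall_eq_or_imp, forall_eq]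
    constructor
    · exact hinit A _ (Or.inl (Or.inr (pu h1))) (by simp)
    · exact hinit B _ (Or.inl (Or.inr (pu h2))) (by simp)
  · intro h
    exact .modal (.k (Set.mem_singleton _)) (.prop (s := (false, Fm.top)) (by simp) (by simp [expn]))
  · intro S h; simp [hp] at h
  · intro A S hd h1 h2
    refine .modal (.d hd) (.prop (s := (true, Fm.neg A)) (pu h2) ?_)
    simp only [expn, List.mem_singleton, forall_eq]
    exact hinit A _ (Or.inl (pu h1)) (by simp)
  · intro A S hf h1 h2
    exact .modal (.k h2) (hinit (.box A) _ (Or.inr (pb h1)) (by simp))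
  · intro A S hf h1 h2
    refine .modal (.k h2) (.prop (s := (false, Fm.neg (.box A))) (by simp) ?_)
    simp only [expn, List.mem_singleton, forall_eq]
    exact hinit (.box A) _ (by simp) (Or.inl (Or.inr (pb h1)))

def Cov (S : Set SF) (X Y : Multiset Fm) : Prop :=
  (∀ A, (true, A) ∈ S → A ∈ X) ∧ (∀ A, (false, A) ∈ S → A ∈ Y)

theorem LM.cL {Ax : MAx} {G X Y ep A} (hA : A ∈ X) (h : LM Ax (G ++ [(A ::ₘ X, Y)], ep)) :
    LM Ax (G ++ [(X, Y)], ep) := by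
  obtain ⟨X', rfl⟩ := Multiset.exists_cons_of_mem hA
  exact .conL h

theorem LM.cR {Ax : MAx} {G X Y ep A} (hA : A ∈ Y) (h : LM Ax (G ++ [(X, A ::ₘ Y)], ep)) :
    LM Ax (G ++ [(X, Y)], ep) := by
  obtain ⟨X', rfl⟩ := Multiset.exists_cons_of_mem hA
  exact .conR h

theorem Cov.ext {S : Set SF} {X Y : Multiset Fm} (h : Cov S X Y) {X' Y' : Multiset Fm} {b : List SF}
    (hX : X ≤ X') (hY : Y ≤ Y')
    (hb : ∀ x ∈ b, (x.1 = true → x.2 ∈ X') ∧ (x.1 = false → x.2 ∈ Y')) :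
    Cov (S ∪ {x | x ∈ b}) X' Y' := by
  constructor
  · rintro A (hA | hA)
    · exact Multiset.mem_of_le hX (h.1 A hA)
    · exact (hb _ hA).1 rfl
  · rintro A (hA | hA)
    · exact Multiset.mem_of_le hY (h.2 A hA)
    · exact (hb _ hA).2 rfl

theorem DD.toLM {Ax : MAx} (hmod : ∀ P S, R P S →
      (∀ G X Y, Cov P X Y → LM Ax (G ++ [(X, Y)], none)) →
      ∀ G X Y, Cov S X Y → LM Ax (G ++ [(X, Y)], none))
    {S : Set SF} (h : DD R S) : ∀ G X Y, Cov S X Y → LM Ax (G ++ [(X, Y)], none) := by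
  induction h with
  | init h1 h2 =>
    intro G X Y hc
    obtain ⟨X', rfl⟩ := Multiset.exists_cons_of_mem (hc.1 _ h1)
    obtain ⟨Y', rfl⟩ := Multiset.exists_cons_of_mem (hc.2 _ h2)
    exact .init
  | modal r _ ih => exact hmod _ _ r ih
  | @prop S s hs _ ih =>
    intro G X Y hc
    have lX : ∀ A, X ≤ A ::ₘ X := fun A => Multiset.le_cons_self _ _
    have lY : ∀ A, Y ≤ A ::ₘ Y := fun A => Multiset.le_cons_self _ _
    obtain ⟨b, A⟩ := s
    cases A with
    | var m => exact ih [] (by simp [expn]) G X Y (hc.ext le_rfl le_rfl (by simp))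
    | box m => exact ih [] (by simp [expn]) G X Y (hc.ext le_rfl le_rfl (by simp))
    | bot =>
      cases b
      · exact ih [] (by simp [expn]) G X Y (hc.ext le_rfl le_rfl (by simp))
      · exact .cL (hc.1 _ hs) .botL
    | top =>
      cases b
      · exact .cR (hc.2 _ hs) .topR
      · exact ih [] (by simp [expn]) G X Y (hc.ext le_rfl le_rfl (by simp))
    | neg A =>
      cases b
      · exact .cR (hc.2 _ hs) (.negR (ih [(true, A)] (by simp [expn]) G _ _
          (hc.ext (lX _) le_rfl (by simp))))
      · exact .cL (hc.1 _ hs) (.negL (ih [(false, A)] (by simp [expn]) G _ _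
          (hc.ext le_rfl (lY _) (by simp))))
    | and A B =>
      cases b
      · exact .cR (hc.2 _ hs) (.andR (ih [(false, A)] (by simp [expn]) G _ _
          (hc.ext le_rfl (lY _) (by simp))) (ih [(false, B)] (by simp [expn]) G _ _
          (hc.ext le_rfl (lY _) (by simp))))
      · exact .cL (hc.1 _ hs) (.andL (ih [(true, A), (true, B)] (by simp [expn]) G _ _
          (hc.ext ((lX B).trans (Multiset.le_cons_self _ _)) le_rfl (by simp))))
    | or A B =>
      cases b
      · exact .cR (hc.2 _ hs) (.orR (ih [(false, A), (false, B)] (by simp [expn]) G _ _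
          (hc.ext le_rfl ((lY B).trans (Multiset.le_cons_self _ _)) (by simp))))
      · exact .cL (hc.1 _ hs) (.orL (ih [(true, A)] (by simp [expn]) G _ _
          (hc.ext (lX _) le_rfl (by simp))) (ih [(true, B)] (by simp [expn]) G _ _
          (hc.ext (lX _) le_rfl (by simp))))
    | imp A B =>
      cases b
      · exact .cR (hc.2 _ hs) (.impR (ih [(true, A), (false, B)] (by simp [expn]) G _ _
          (hc.ext (lX _) (lY _) (by simp))))
      · exact .cL (hc.1 _ hs) (.impL (ih [(true, B)] (by simp [expn]) G _ _
          (hc.ext (lX _) le_rfl (by simp))) (ih [(false, A)] (by simp [expn]) G _ _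
          (hc.ext le_rfl (lY _) (by simp))))

/-- one non-focus slot -/
theorem slot {Ax : MAx} (h5 : Ax.five = true) {s t : SF} (hK : KK Ax.four s t) {S : Set SF}
    (ht : t ∈ S) {X Y : Multiset Fm} (hc : Cov S X Y) {G Sg Pp}
    (h : ∀ G X Y, Cov {s} X Y → Sg ≤ X → Pp ≤ Y → LM Ax (G ++ [(X, Y)], none)) :
    LM Ax (G ++ [(X, Y)], some (Sg, Pp)) := by
  cases hK with
  | tu A =>
    obtain ⟨X', rfl⟩ := Multiset.exists_cons_of_mem (hc.1 _ ht)
    refine .boxLm ?_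
    have := h (G ++ [(X', Y)]) (A ::ₘ Sg) Pp (by simp [Cov]) (Multiset.le_cons_self _ _) le_rfl
    simpa using this
  | tk A hf =>
    obtain ⟨X', rfl⟩ := Multiset.exists_cons_of_mem (hc.1 _ ht)
    refine .rule4 hf ?_
    have := h (G ++ [(X', Y)]) (A.box ::ₘ Sg) Pp (by simp [Cov]) (Multiset.le_cons_self _ _) le_rfl
    simpa using this
  | fk A =>
    obtain ⟨Y', rfl⟩ := Multiset.exists_cons_of_mem (hc.2 _ ht)
    refine .rule5 h5 ?_
    have := h (G ++ [(X, Y')]) Sg (A.box ::ₘ Pp) (by simp [Cov]) le_rfl (Multiset.le_cons_self _ _)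
    simpa using this

theorem Cov.pair {s t : SF} {X Y : Multiset Fm} (h1 : Cov {s} X Y) (h2 : Cov {t} X Y) :
    Cov {s, t} X Y := by
  constructor
  · rintro A (h | h)
    · exact h1.1 A h
    · exact h2.1 A h
  · rintro A (h | h)
    · exact h1.2 A h
    · exact h2.2 A h

theorem RN.toLM {Ax : MAx} (h5 : Ax.five = true) : ∀ P S, RN Ax P S →
      (∀ G X Y, Cov P X Y → LM Ax (G ++ [(X, Y)], none)) →
      ∀ G X Y, Cov S X Y → LM Ax (G ++ [(X, Y)], none) := by
  intro P S r ih G X Y hc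
  cases r with
  | @foc _ B s t h1 h2 h3 =>
    refine .cR (hc.2 _ h1) (.boxRm (slot h5 h3 h2 hc ?_))
    intro G X Y hs _ hY
    refine ih _ _ _ (Cov.pair ?_ hs)
    have : B ∈ Y := Multiset.mem_of_le hY (by simp)
    simp [Cov, this]
  | @p _ A hp h1 =>
    refine .ruleP hp (slot (t := (true, Fm.box A)) h5 (.tu _) h1 hc ?_)
    intro G X Y hs _ _
    exact ih _ _ _ hs
  | @d _ s1 s2 t1 t2 hd h1 h2 h3 h4 =>
    have key : ∀ A s t, (true, Fm.box A) ∈ S → t ∈ S → KK Ax.four s t →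
        (∀ G X Y, Cov {(true, A), s} X Y → LM Ax (G ++ [(X, Y)], none)) →
        LM Ax (G ++ [(X, Y)], none) := by
      intro A s t k1 k2 k3 ih
      refine .cL (hc.1 _ k1) (.ruleD hd (slot h5 k3 k2 hc ?_))
      intro G X Y hs hX _
      refine ih _ _ _ (Cov.pair ?_ hs)
      have : A ∈ X := Multiset.mem_of_le hX (by simp)
      simp [Cov, this]
    by_cases e1 : s1 = t1
    · by_cases e2 : s2 = t2
      · subst e1; subst e2
        apply ih
        constructor
        · rintro A (e | e)
          · exact hc.1 _ (e ▸ h1)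
          · cases e; exact hc.1 _ h2
        · rintro A (e | e)
          · exact hc.2 _ (e ▸ h1)
          · cases e; exact hc.2 _ h2
      · cases h4 with
        | tu A =>
          rw [Set.pair_comm] at ih
          exact key A _ _ h2 h1 h3 ih
        | tk => exact absurd rfl e2
        | fk => exact absurd rfl e2
    · cases h3 with
      | tu A => exact key A _ _ h1 h2 h4 ih
      | tk => exact absurd rfl e1
      | fk => exact absurd rfl e1

theorem list_end {α} (G : List α) (x : α) : ∃ c L, G ++ [x] = c :: L := by
  cases G with
  | nil => exact ⟨x, [], rfl⟩
  | cons c L => exact ⟨c, L ++ [x], rfl⟩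

theorem LM.rC {Ax : MAx} (hc : Ax.c = true) {G x} {Sg Pp : Multiset Fm}
    (h : LM Ax (G ++ [x], some (Sg, Pp))) : LM Ax (G ++ [x, (Sg, Pp)], none) := by
  obtain ⟨c, L, e⟩ := list_end G x
  have : G ++ [x, (Sg, Pp)] = (G ++ [x]) ++ [(Sg, Pp)] := by simp
  rw [this]
  rw [e] at h ⊢
  exact .ruleC hc h

theorem LM.rN {Ax : MAx} (hn : Ax.n = true ∨ Ax.five = true) {G x} {Sg Pp : Multiset Fm}
    (h : LM Ax (G ++ [x, (Sg, Pp)], none)) : LM Ax (G ++ [x], some (Sg, Pp)) := by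
  obtain ⟨c, L, e⟩ := list_end G x
  have : G ++ [x, (Sg, Pp)] = (G ++ [x]) ++ [(Sg, Pp)] := by simp
  rw [this] at h
  rw [e] at h ⊢
  exact .ruleN hn h

theorem fillL {Ax : MAx} (hc : Ax.c = true) (h4 : Ax.four = true)
    {G X Y} (l : List Fm) : (∀ a ∈ l, a ∈ X) → ∀ Sg Pp,
      (∀ Sg', Sg ≤ Sg' → (∀ A, Fm.box A ∈ l → A ∈ Sg' ∧ Fm.box A ∈ Sg') →
        LM Ax (G ++ [(X, Y)], some (Sg', Pp))) →
      LM Ax (G ++ [(X, Y)], some (Sg, Pp)) := by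
  induction l with
  | nil => intro _ Sg Pp h; exact h Sg le_rfl (by simp)
  | cons a l ih =>
    intro hl Sg Pp h
    have hl' : ∀ a ∈ l, a ∈ X := fun a ha => hl a (List.mem_cons_of_mem _ ha)
    by_cases e : ∃ A, a = Fm.box A
    · obtain ⟨A, rfl⟩ := e
      have hA := hl _ List.mem_cons_self
      refine .cL hA (.boxLm (.rC hc (.cL hA (.rule4 h4 (.rC hc (ih hl' _ _ ?_))))))
      intro Sg' hS hB
      refine h Sg' (le_trans ((Multiset.le_cons_self _ _).trans (Multiset.le_cons_self _ _)) hS) ?_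
      intro B hB'
      rcases List.mem_cons.mp hB' with e | e
      · cases e
        exact ⟨Multiset.mem_of_le hS (by simp), Multiset.mem_of_le hS (by simp)⟩
      · exact hB B e
    · refine ih hl' _ _ ?_
      intro Sg' hS hB
      refine h Sg' hS ?_
      intro B hB'
      rcases List.mem_cons.mp hB' with e' | e'
      · exact absurd ⟨B, e'.symm⟩ e
      · exact hB B e'

theorem fillR {Ax : MAx} (hc : Ax.c = true) (h5 : Ax.five = true)
    {G X Y} (l : List Fm) : (∀ a ∈ l, a ∈ Y) → ∀ Sg Pp,
      (∀ Pp', Pp ≤ Pp' → (∀ A, Fm.box A ∈ l → Fm.box A ∈ Pp') →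
        LM Ax (G ++ [(X, Y)], some (Sg, Pp'))) →
      LM Ax (G ++ [(X, Y)], some (Sg, Pp)) := by
  induction l with
  | nil => intro _ Sg Pp h; exact h Pp le_rfl (by simp)
  | cons a l ih =>
    intro hl Sg Pp h
    have hl' : ∀ a ∈ l, a ∈ Y := fun a ha => hl a (List.mem_cons_of_mem _ ha)
    by_cases e : ∃ A, a = Fm.box A
    · obtain ⟨A, rfl⟩ := e
      have hA := hl _ List.mem_cons_self
      refine .cR hA (.rule5 h5 (.rC hc (ih hl' _ _ ?_)))
      intro Sg' hS hB
      refine h Sg' (le_trans (Multiset.le_cons_self _ _) hS) ?_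
      intro B hB'
      rcases List.mem_cons.mp hB' with e | e
      · cases e
        exact Multiset.mem_of_le hS (by simp)
      · exact hB B e
    · refine ih hl' _ _ ?_
      intro Sg' hS hB
      refine h Sg' hS ?_
      intro B hB'
      rcases List.mem_cons.mp hB' with e' | e'
      · exact absurd ⟨B, e'.symm⟩ e
      · exact hB B e'

theorem fill {Ax : MAx} (hc : Ax.c = true) (h4 : Ax.four = true) (h5 : Ax.five = true)
    {S : Set SF} {G X Y} (hS : Cov S X Y) (Sg Pp : Multiset Fm)
    (h : ∀ G Sg' Pp', Sg ≤ Sg' → Pp ≤ Pp' → Cov (prem S) Sg' Pp' →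
      LM Ax (G ++ [(Sg', Pp')], none)) :
    LM Ax (G ++ [(X, Y)], some (Sg, Pp)) := by
  refine fillL hc h4 X.toList (by simp) Sg Pp (fun Sg' h1 h2 => ?_)
  refine fillR hc h5 Y.toList (by simp) Sg' Pp (fun Pp' h3 h4 => ?_)
  refine .rN (Or.inr h5) ?_
  have := h (G ++ [(X, Y)]) Sg' Pp' h1 h3 ?_
  · simpa using this
  simp only [Multiset.mem_toList] at h2 h4
  constructor
  · rintro A (⟨_, hA⟩ | ⟨⟨B, rfl⟩, hA⟩)
    · exact (h2 _ (hS.1 _ hA)).1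
    · exact (h2 _ (hS.1 _ hA)).2
  · rintro A (⟨e, hA⟩ | ⟨⟨B, e⟩, hA⟩)
    · cases e
    · dsimp only at e
      subst e
      exact h4 _ (hS.2 _ hA)

theorem RC.toLM {Ax : MAx} (hc : Ax.c = true) (h4 : Ax.four = true) (h5 : Ax.five = true) :
    ∀ P S, RC Ax P S →
      (∀ G X Y, Cov P X Y → LM Ax (G ++ [(X, Y)], none)) →
      ∀ G X Y, Cov S X Y → LM Ax (G ++ [(X, Y)], none) := by
  intro P S r ih G X Y hS
  cases r with
  | @k _ B h1 =>
    refine .cR (hS.2 _ h1) (.boxRm (fill hc h4 h5 hS _ _ ?_))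
    intro G X' Y' _ hY hC
    refine ih _ _ _ ⟨?_, ?_⟩
    · rintro A (e | e)
      · cases e
      · exact hC.1 _ e
    · rintro A (e | e)
      · cases e; exact Multiset.mem_of_le hY (by simp)
      · exact hC.2 _ e
  | d hd =>
    by_cases e : ∃ A, Fm.box A ∈ X
    · obtain ⟨A, hA⟩ := e
      refine .cL hA (.ruleD hd (fill hc h4 h5 hS _ _ ?_))
      intro G X' Y' _ _ hC
      exact ih _ _ _ hC
    · refine ih _ _ _ ⟨?_, ?_⟩
      · rintro A (⟨_, hA⟩ | ⟨_, hA⟩)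
        · exact absurd ⟨_, hS.1 _ hA⟩ e
        · exact hS.1 _ hA
      · rintro A (⟨e, hA⟩ | ⟨_, hA⟩)
        · cases e
        · exact hS.2 _ hA

end calc0

def conj : List Fm → Fm
  | [] => .top
  | a :: l => .and a (conj l)

def disj : List Fm → Fm
  | [] => .bot
  | a :: l => .or a (disj l)

noncomputable def fm (c : Cmp) : Fm := .imp (conj c.1.toList) (disj c.2.toList)

theorem eval_conj (v : Fm → Prop) (l : List Fm) : evalP v (conj l) ↔ ∀ a ∈ l, evalP v a := by
  induction l with
  | nil => simp [conj, evalP]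
  | cons a l ih => simp [conj, evalP, ih]

theorem eval_disj (v : Fm → Prop) (l : List Fm) : evalP v (disj l) ↔ ∃ a ∈ l, evalP v a := by
  induction l with
  | nil => simp [disj, evalP]
  | cons a l ih => simp [disj, evalP, ih]

theorem eval_fm (v : Fm → Prop) (X Y : Multiset Fm) :
    evalP v (fm (X, Y)) ↔ ((∀ a ∈ X, evalP v a) → ∃ b ∈ Y, evalP v b) := by
  simp [fm, evalP, eval_conj, eval_disj]

def AllT (v : Fm → Prop) (X : Multiset Fm) : Prop := ∀ a ∈ X, evalP v a

def ExT (v : Fm → Prop) (Y : Multiset Fm) : Prop := ∃ b ∈ Y, evalP v b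

theorem allT_cons (v : Fm → Prop) (A : Fm) (X : Multiset Fm) :
    AllT v (A ::ₘ X) ↔ evalP v A ∧ AllT v X := by simp [AllT]

theorem exT_cons (v : Fm → Prop) (A : Fm) (Y : Multiset Fm) :
    ExT v (A ::ₘ Y) ↔ evalP v A ∨ ExT v Y := by simp [ExT]

theorem eval_fm' (v : Fm → Prop) (X Y : Multiset Fm) :
    evalP v (fm (X, Y)) ↔ (AllT v X → ExT v Y) := eval_fm v X Y

section hil
variable {Ax : MAx}

theorem MThm.pc1 {X Y : Fm} (h : MThm Ax X) (hv : ∀ v, evalP v X → evalP v Y) : MThm Ax Y :=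
  .mp (.taut (fun v => hv v)) h

theorem MThm.pc2 {X1 X2 Y : Fm} (h1 : MThm Ax X1) (h2 : MThm Ax X2)
    (hv : ∀ v, evalP v X1 → evalP v X2 → evalP v Y) : MThm Ax Y :=
  .mp (.mp (.taut (A := .imp X1 (.imp X2 Y)) (fun v => hv v)) h1) h2

theorem MThm.bm {A B : Fm} (h : MThm Ax (.imp A B)) : MThm Ax (.imp (.box A) (.box B)) := by
  have h1 : MThm Ax (.imp A (.and A B)) := h.pc1 (by intro v; simp only [evalP]; tauto)
  have h2 : MThm Ax (.imp (.and A B) A) := .taut (by intro v; simp only [evalP]; tauto)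
  exact MThm.pc2 (.cong h1 h2) (.axM (A := A) (B := B)) (by intro v; simp only [evalP]; tauto)

theorem MThm.bt (hn : Ax.n = true ∨ Ax.five = true) : MThm Ax (.box .top) := by
  rcases hn with hn | h5
  · exact .axN hn
  · have h1 : ∀ A, MThm Ax (.imp (.box A) (.box .top)) := fun A =>
      .bm (.taut (by intro v; simp only [evalP]; tauto))
    have h2 := MThm.pc2 (h1 .bot) (h1 (.neg (.box .bot)))
      (Y := .imp (.or (.box .bot) (.box (.neg (.box .bot)))) (.box .top))
      (by intro v; simp only [evalP]; tauto)
    exact .mp h2 (.ax5 h5)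

theorem MThm.nec (hn : Ax.n = true ∨ Ax.five = true) {A : Fm} (h : MThm Ax A) :
    MThm Ax (.box A) :=
  .mp (.bm (h.pc1 (by intro v; simp only [evalP]; tauto))) (.bt hn)

theorem MThm.b2 (hc : Ax.c = true) {A B C : Fm} (h : MThm Ax (.imp (.and A B) C)) :
    MThm Ax (.imp (.and (.box A) (.box B)) (.box C)) :=
  MThm.pc2 (.axC (A := A) (B := B) hc) h.bm (by intro v; simp only [evalP]; tauto)

theorem LM.soundGen (I : List Cmp → Option Cmp → Prop)
    (i0 : ∀ pre post ep c, (∀ v, evalP v (fm c)) → I (pre ++ c :: post) ep)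
    (i2 : ∀ pre post ep c1 c2 c, (∀ v, evalP v (fm c1) → evalP v (fm c2) → evalP v (fm c)) →
      I (pre ++ c1 :: post) ep → I (pre ++ c2 :: post) ep → I (pre ++ c :: post) ep)
    (bR : ∀ G Γ Δ B, I (G ++ [(Γ, Δ)]) (some (0, {B})) → I (G ++ [(Γ, Fm.box B ::ₘ Δ)]) none)
    (bL : ∀ G Γ Δ Sg Pp A, I (G ++ [(Γ, Δ), (A ::ₘ Sg, Pp)]) none →
      I (G ++ [(Fm.box A ::ₘ Γ, Δ)]) (some (Sg, Pp)))
    (rC : ∀ c G e, Ax.c = true → I (c :: G) (some e) → I ((c :: G) ++ [e]) none)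
    (rN : ∀ c G e, (Ax.n = true ∨ Ax.five = true) → I ((c :: G) ++ [e]) none → I (c :: G) (some e))
    (rP : ∀ G Γ Δ, Ax.p = true → I (G ++ [(Γ, Δ)]) (some (0, 0)) → I (G ++ [(Γ, Δ)]) none)
    (rD : ∀ G Γ Δ A, Ax.d = true → I (G ++ [(Γ, Δ)]) (some ({A}, 0)) →
      I (G ++ [(Fm.box A ::ₘ Γ, Δ)]) none)
    (ht : Ax.t = false)
    (r4 : ∀ G Γ Δ Sg Pp A, Ax.four = true → I (G ++ [(Γ, Δ), (Fm.box A ::ₘ Sg, Pp)]) none →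
      I (G ++ [(Fm.box A ::ₘ Γ, Δ)]) (some (Sg, Pp)))
    (r5 : ∀ G Γ Δ Sg Pp A, Ax.five = true → I (G ++ [(Γ, Δ), (Sg, Fm.box A ::ₘ Pp)]) none →
      I (G ++ [(Γ, Fm.box A ::ₘ Δ)]) (some (Sg, Pp)))
    {s : LNSm} (h : LM Ax s) : I s.1 s.2 := by
  have i1 : ∀ pre post ep c1 c, (∀ v, evalP v (fm c1) → evalP v (fm c)) →
      I (pre ++ c1 :: post) ep → I (pre ++ c :: post) ep :=
    fun pre post ep c1 c hv h => i2 pre post ep c1 c1 c (fun v h _ => hv v h) h h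
  induction h with
  | init => apply i0; intro v; simp only [eval_fm', allT_cons, exT_cons]; tauto
  | botL => apply i0; intro v; simp only [eval_fm', allT_cons, exT_cons, evalP]; tauto
  | topR => apply i0; intro v; simp only [eval_fm', allT_cons, exT_cons, evalP]; tauto
  | andR _ _ ih1 ih2 =>
    refine i2 _ _ _ _ _ _ ?_ ih1 ih2
    intro v; simp only [eval_fm', allT_cons, exT_cons, evalP]; tauto
  | orL _ _ ih1 ih2 =>
    refine i2 _ _ _ _ _ _ ?_ ih1 ih2
    intro v; simp only [eval_fm', allT_cons, exT_cons, evalP]; tauto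
  | impL _ _ ih1 ih2 =>
    refine i2 _ _ _ _ _ _ ?_ ih1 ih2
    intro v; simp only [eval_fm', allT_cons, exT_cons, evalP]; tauto
  | boxRm _ ih => exact bR _ _ _ _ ih
  | boxLm _ ih => exact bL _ _ _ _ _ _ ih
  | ruleC hc _ ih => exact rC _ _ _ hc ih
  | ruleN hc _ ih => exact rN _ _ _ hc ih
  | ruleP hc _ ih => exact rP _ _ _ hc ih
  | ruleD hc _ ih => exact rD _ _ _ _ hc ih
  | ruleT h => rw [ht] at h; cases h
  | rule4 hc _ ih => exact r4 _ _ _ _ _ _ hc ih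
  | rule5 hc _ ih => exact r5 _ _ _ _ _ _ hc ih
  | _ =>
    rename_i ih
    refine i1 _ _ _ _ _ ?_ ih
    intro v; simp only [eval_fm', allT_cons, exT_cons, evalP]; tauto

/-! The interpretation without the axiom C. -/

noncomputable def epf : Option Cmp → Fm
  | none => .bot
  | some e => .box (fm e)

def JJ (Ax : MAx) : List Cmp → Option Cmp → Prop
  | [], _ => False
  | [c], ep => MThm Ax (.or (fm c) (epf ep))
  | c :: d :: L, ep => MThm Ax (fm c) ∨ JJ Ax (d :: L) ep

theorem JJ_cons (x c : Cmp) (pre post ep) :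
    JJ Ax (x :: (pre ++ c :: post)) ep ↔ MThm Ax (fm x) ∨ JJ Ax (pre ++ c :: post) ep := by
  cases pre <;> exact Iff.rfl

theorem JJ_ctx {c1 c2 c : Cmp} {post1 post2 post ep1 ep2 ep}
    (h : JJ Ax (c1 :: post1) ep1 → JJ Ax (c2 :: post2) ep2 → JJ Ax (c :: post) ep) (pre : List Cmp) :
    JJ Ax (pre ++ c1 :: post1) ep1 → JJ Ax (pre ++ c2 :: post2) ep2 → JJ Ax (pre ++ c :: post) ep := by
  induction pre with
  | nil => exact h
  | cons x pre ih =>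
    simp only [List.cons_append, JJ_cons]
    tauto

theorem JJ_ctx1 {c1 c : Cmp} {post1 post ep1 ep}
    (h : JJ Ax (c1 :: post1) ep1 → JJ Ax (c :: post) ep) (pre : List Cmp)
    (hh : JJ Ax (pre ++ c1 :: post1) ep1) : JJ Ax (pre ++ c :: post) ep :=
  JJ_ctx (fun h1 _ => h h1) pre hh hh

theorem JJ_ctx0 {c : Cmp} {post ep}
    (h : JJ Ax (c :: post) ep) (pre : List Cmp) : JJ Ax (pre ++ c :: post) ep := by
  induction pre with
  | nil => exact h
  | cons x pre ih => exact (JJ_cons _ _ _ _ _).2 (Or.inr ih)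

theorem sound_N (hc : Ax.c = false) (ht : Ax.t = false) {s : LNSm} (h : LM Ax s) :
    JJ Ax s.1 s.2 := by
  refine LM.soundGen (JJ Ax) ?_ ?_ ?_ ?_ ?_ ?_ ?_ ?_ ht ?_ ?_ h
  · intro pre post ep c hv
    apply JJ_ctx0
    cases post with
    | nil => exact .taut (fun v => Or.inl (hv v))
    | cons d L => exact Or.inl (.taut hv)
  · intro pre post ep c1 c2 c hv
    apply JJ_ctx
    cases post with
    | nil =>
      intro h1 h2
      refine MThm.pc2 h1 h2 (fun v => ?_)
      have := hv v
      simp only [evalP]; tauto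
    | cons d L =>
      rintro (h1 | h1) (h2 | h2)
      · exact Or.inl (MThm.pc2 h1 h2 hv)
      · exact Or.inr h2
      · exact Or.inr h1
      · exact Or.inr h1
  · intro G Γ Δ B
    apply JJ_ctx1
    intro h
    have h1 : MThm Ax (.imp (fm (0, {B})) B) := .taut (by intro v; simp [evalP, eval_fm])
    refine MThm.pc2 h h1.bm (fun v => ?_)
    simp only [eval_fm', allT_cons, exT_cons, evalP, epf]; tauto
  · intro G Γ Δ Sg Pp A
    apply JJ_ctx1
    rintro (h | h)
    · refine h.pc1 (fun v => ?_)
      simp only [eval_fm', allT_cons, exT_cons, evalP, epf]; tauto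
    · have h1 : MThm Ax (.imp A (fm (Sg, Pp))) := MThm.pc1 h (fun v => by
        simp only [eval_fm', allT_cons, exT_cons, evalP, epf]; tauto)
      refine h1.bm.pc1 (fun v => ?_)
      simp only [eval_fm', allT_cons, exT_cons, evalP, epf]; tauto
  · intro _ _ _ h; rw [hc] at h; cases h
  · intro c G e hn
    obtain ⟨G', x, e'⟩ : ∃ G' x, c :: G = G' ++ [x] :=
      ⟨_, _, (List.dropLast_append_getLast (List.cons_ne_nil c G)).symm⟩
    rw [e', List.append_assoc]
    apply JJ_ctx1
    rintro (h | h)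
    · exact h.pc1 (fun v h => Or.inl h)
    · have h1 : MThm Ax (fm e) := MThm.pc1 h (fun v => by simp only [evalP, epf]; tauto)
      exact (h1.nec hn).pc1 (fun v h => Or.inr h)
  · intro G Γ Δ hp
    apply JJ_ctx1
    intro h
    have h1 : MThm Ax (.imp (fm (0, 0)) .bot) := .taut (by intro v; simp [evalP, eval_fm])
    have h2 := MThm.pc2 h1.bm (.axP hp) (Y := .neg (.box (fm (0, 0))))
      (fun v => by simp only [evalP]; tauto)
    refine MThm.pc2 h h2 (fun v => ?_)
    simp only [evalP, epf]; tauto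
  · intro G Γ Δ A hd
    apply JJ_ctx1
    intro h
    have h1 : MThm Ax (.imp (fm ({A}, 0)) (.neg A)) := .taut (by intro v; simp [evalP, eval_fm])
    have h2 := MThm.pc2 h1.bm (.axD (A := A) hd) (Y := .imp (.box A) (.neg (.box (fm ({A}, 0)))))
      (fun v => by simp only [evalP]; tauto)
    refine MThm.pc2 h h2 (fun v => ?_)
    simp only [eval_fm', allT_cons, exT_cons, evalP, epf]; tauto
  · intro G Γ Δ Sg Pp A h4
    apply JJ_ctx1
    rintro (h | h)
    · refine h.pc1 (fun v => ?_)
      simp only [eval_fm', allT_cons, exT_cons, evalP, epf]; tauto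
    · have h1 : MThm Ax (.imp (.box A) (fm (Sg, Pp))) := MThm.pc1 h (fun v => by
        simp only [eval_fm', allT_cons, exT_cons, evalP, epf]; tauto)
      refine h1.bm.pc2 (.ax4 (A := A) h4) (fun v => ?_)
      simp only [eval_fm', allT_cons, exT_cons, evalP, epf]; tauto
  · intro G Γ Δ Sg Pp A h5
    apply JJ_ctx1
    rintro (h | h)
    · refine h.pc1 (fun v => ?_)
      simp only [eval_fm', allT_cons, exT_cons, evalP, epf]; tauto
    · have h1 : MThm Ax (.imp (.neg (.box A)) (fm (Sg, Pp))) := MThm.pc1 h (fun v => by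
        simp only [eval_fm', allT_cons, exT_cons, evalP, epf]; tauto)
      refine h1.bm.pc2 (.ax5 (A := A) h5) (fun v => ?_)
      simp only [eval_fm', allT_cons, exT_cons, evalP, epf]; tauto

/-! The interpretation with the axiom C. -/

noncomputable def QQ : List Cmp → Option Cmp → Fm
  | [], none => .bot
  | [], some e => .box (.or (fm e) .bot)
  | c :: L, ep => .box (.or (fm c) (QQ L ep))

def IC (Ax : MAx) : List Cmp → Option Cmp → Prop
  | [], _ => False
  | c :: L, ep => MThm Ax (.or (fm c) (QQ L ep))

theorem QQ_lift (hc : Ax.c = true) {c1 c2 c : Cmp} {post1 post2 post ep1 ep2 ep}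
    (h : MThm Ax (.imp (.and (.or (fm c1) (QQ post1 ep1)) (.or (fm c2) (QQ post2 ep2)))
      (.or (fm c) (QQ post ep)))) (pre : List Cmp) :
    MThm Ax (.imp (.and (QQ (pre ++ c1 :: post1) ep1) (QQ (pre ++ c2 :: post2) ep2))
      (QQ (pre ++ c :: post) ep)) := by
  induction pre with
  | nil => simp only [List.nil_append, QQ]; exact h.b2 hc
  | cons x pre ih =>
    simp only [List.cons_append, QQ]
    refine MThm.b2 hc (ih.pc1 (fun v => ?_))
    simp only [evalP]; tauto

theorem IC_ctx (hc : Ax.c = true) {c1 c2 c : Cmp} {post1 post2 post ep1 ep2 ep}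
    (h : MThm Ax (.imp (.and (.or (fm c1) (QQ post1 ep1)) (.or (fm c2) (QQ post2 ep2)))
      (.or (fm c) (QQ post ep)))) (pre : List Cmp)
    (h1 : IC Ax (pre ++ c1 :: post1) ep1) (h2 : IC Ax (pre ++ c2 :: post2) ep2) :
    IC Ax (pre ++ c :: post) ep := by
  cases pre with
  | nil => exact .mp h (h1.pc2 h2 (fun v h h' => ⟨h, h'⟩))
  | cons x pre =>
    have h3 : MThm Ax (.and (.or (fm x) (QQ (pre ++ c1 :: post1) ep1))
      (.or (fm x) (QQ (pre ++ c2 :: post2) ep2))) := MThm.pc2 h1 h2 (fun v h h' => ⟨h, h'⟩)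
    refine MThm.pc2 h3 (QQ_lift hc h pre) (fun v => ?_)
    simp only [evalP]; tauto

theorem IC_ctx1 (hc : Ax.c = true) {c1 c : Cmp} {post1 post ep1 ep}
    (h : MThm Ax (.imp (.or (fm c1) (QQ post1 ep1)) (.or (fm c) (QQ post ep)))) (pre : List Cmp)
    (h1 : IC Ax (pre ++ c1 :: post1) ep1) :
    IC Ax (pre ++ c :: post) ep :=
  IC_ctx hc (h.pc1 (fun v => by simp only [evalP]; tauto)) pre h1 h1

theorem QQ_nec (hn : Ax.n = true) {c : Cmp} {post ep}
    (h : MThm Ax (.or (fm c) (QQ post ep))) (pre : List Cmp) :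
    MThm Ax (QQ (pre ++ c :: post) ep) := by
  induction pre with
  | nil => exact h.nec (Or.inl hn)
  | cons x pre ih => exact MThm.nec (Or.inl hn) (ih.pc1 (fun v h => Or.inr h))

theorem IC_ctx0 (hn : Ax.n = true) {c : Cmp} {post ep}
    (h : MThm Ax (.or (fm c) (QQ post ep))) (pre : List Cmp) : IC Ax (pre ++ c :: post) ep := by
  cases pre with
  | nil => exact h
  | cons x pre => exact (QQ_nec hn h pre).pc1 (fun v h => Or.inr h)

theorem QQ_end (e : Cmp) (L : List Cmp) : QQ (L ++ [e]) none = QQ L (some e) := by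
  induction L with
  | nil => rfl
  | cons c L ih => simp only [List.cons_append, QQ, ih]

theorem sound_C (hc : Ax.c = true) (hn : Ax.n = true) (hp : Ax.p = false) (ht : Ax.t = false)
    {s : LNSm} (h : LM Ax s) : IC Ax s.1 s.2 := by
  refine LM.soundGen (IC Ax) ?_ ?_ ?_ ?_ ?_ ?_ ?_ ?_ ht ?_ ?_ h
  · intro pre post ep c hv
    exact IC_ctx0 hn (.taut (fun v => Or.inl (hv v))) pre
  · intro pre post ep c1 c2 c hv
    refine IC_ctx hc (.taut (fun v => ?_)) pre
    have := hv v
    simp only [evalP]; tauto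
  · intro G Γ Δ B
    have h1 : MThm Ax (.imp (.or (fm (0, {B})) .bot) B) := .taut (by intro v; simp [evalP, eval_fm])
    refine IC_ctx1 hc (h1.bm.pc1 (fun v => ?_)) G
    simp only [eval_fm', allT_cons, exT_cons, evalP, QQ]; tauto
  · intro G Γ Δ Sg Pp A
    have h1 : MThm Ax (.imp (.and A (.or (fm (A ::ₘ Sg, Pp)) .bot)) (.or (fm (Sg, Pp)) .bot)) :=
      .taut (fun v => by
        simp only [eval_fm', allT_cons, exT_cons, evalP]; tauto)
    refine IC_ctx1 hc ((h1.b2 hc).pc1 (fun v => ?_)) G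
    simp only [eval_fm', allT_cons, exT_cons, evalP, QQ]; tauto
  · intro c G e _ h
    simp only [List.cons_append, IC, QQ_end] at h ⊢
    exact h
  · intro c G e _ h
    simp only [List.cons_append, IC, QQ_end] at h ⊢
    exact h
  · intro _ _ _ h; rw [hp] at h; cases h
  · intro G Γ Δ A hd
    have h1 : MThm Ax (.imp (.or (fm ({A}, 0)) .bot) (.neg A)) :=
      .taut (by intro v; simp [evalP, eval_fm])
    refine IC_ctx1 hc (h1.bm.pc2 (.axD (A := A) hd) (fun v => ?_)) G
    simp only [eval_fm', allT_cons, exT_cons, evalP, QQ]; tauto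
  · intro G Γ Δ Sg Pp A h4
    have h1 : MThm Ax (.imp (.and (.box A) (.or (fm (.box A ::ₘ Sg, Pp)) .bot)) (.or (fm (Sg, Pp)) .bot)) :=
      .taut (fun v => by
        simp only [eval_fm', allT_cons, exT_cons, evalP]; tauto)
    refine IC_ctx1 hc ((h1.b2 hc).pc2 (.ax4 (A := A) h4) (fun v => ?_)) G
    simp only [eval_fm', allT_cons, exT_cons, evalP, QQ]; tauto
  · intro G Γ Δ Sg Pp A h5
    have h1 : MThm Ax (.imp (.and (.neg (.box A)) (.or (fm (Sg, .box A ::ₘ Pp)) .bot)) (.or (fm (Sg, Pp)) .bot)) :=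
      .taut (fun v => by
        simp only [eval_fm', allT_cons, exT_cons, evalP]; tauto)
    refine IC_ctx1 hc ((h1.b2 hc).pc2 (.ax5 (A := A) h5) (fun v => ?_)) G
    simp only [eval_fm', allT_cons, exT_cons, evalP, QQ]; tauto

theorem main_N (hd4 : Ax.d = true → Ax.four = true) (hc : Ax.c = false)
    (hn : Ax.n = false) (ht : Ax.t = false) (h5 : Ax.five = true) (A : Fm) :
    MThm Ax A ↔ LM Ax ([(0, {A})], none) := by
  constructor
  · intro h
    exact DD.toLM (RN.toLM h5) (toDD_RN hd4 hc hn ht h) [] 0 {A} (by simp [Cov])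
  · intro h
    have := sound_N hc ht h
    exact MThm.pc1 this (fun v => by simp [evalP, eval_fm, epf])

theorem main_C (hc : Ax.c = true) (hn : Ax.n = true) (hp : Ax.p = false) (ht : Ax.t = false)
    (h4 : Ax.four = true) (h5 : Ax.five = true) (A : Fm) :
    MThm Ax A ↔ LM Ax ([(0, {A})], none) := by
  constructor
  · intro h
    exact DD.toLM (RC.toLM hc h4 h5) (toDD_RC hp ht h) [] 0 {A} (by simp [Cov])
  · intro h
    have := sound_C hc hn hp ht h
    exact MThm.pc1 this (fun v => by simp [evalP, eval_fm, QQ])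

end hil

/-- Soundness and completeness of the linear nested sequent calculus
`LNS_LConW` for each of the logics `L ∈ {M5, MP5, M45, MP45, MD45, K45,
KD45}`: `A ∈ L` iff the linear nested sequent `⇒ A` is derivable in
`LNS_LConW`. -/
theorem LNSm_five_sound_complete :
    ∀ Ax ∈ [axM5, axMP5, axM45, axMP45, axMD45, axK45, axKD45],
      ∀ A : Fm, MThm Ax A ↔ LM Ax ([(0, {A})], none) := by
  intro Ax hAx A
  simp only [List.mem_cons, List.not_mem_nil, or_false] at hAx
  rcases hAx with rfl | rfl | rfl | rfl | rfl | rfl | rfl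
  · exact main_N (by simp [axM5]) rfl rfl rfl rfl A
  · exact main_N (by simp [axMP5]) rfl rfl rfl rfl A
  · exact main_N (by simp [axM45]) rfl rfl rfl rfl A
  · exact main_N (by simp [axMP45]) rfl rfl rfl rfl A
  · exact main_N (by simp [axMD45]) rfl rfl rfl rfl A
  · exact main_C rfl rfl rfl rfl rfl rfl A
  · exact main_C rfl rfl rfl rfl rfl rfl A
end

section
/- A sequent Γ ⇒ Δ is provable in the end-active variant of the linear nested sequent calculus LNS_K if and only if its translation TL_{x₁}(Γ ⇒ Δ) is provable in the end-active labelled line sequent calculus LLS_K. -/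
/-- The end-active variant of the linear nested sequent calculus `LNS_K` for
modal logic `K`:  a linear nested sequent is a nonempty list of components
joined by `⫽`; the classical propositional rules are applied in the last
component, and the modal rules `□_L` and `□_R` are applied at the end. -/
inductive EAK : List Cmp → Prop
  | init {G : List Cmp} {Γ Δ : Multiset Fm} {m : ℕ} :
      EAK (G ++ [(Fm.var m ::ₘ Γ, Fm.var m ::ₘ Δ)])
  | botL {G Γ Δ} : EAK (G ++ [(Fm.bot ::ₘ Γ, Δ)])
  | topR {G Γ Δ} : EAK (G ++ [(Γ, Fm.top ::ₘ Δ)])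
  | negL {G Γ Δ A} :
      EAK (G ++ [(Γ, A ::ₘ Δ)]) → EAK (G ++ [(Fm.neg A ::ₘ Γ, Δ)])
  | negR {G Γ Δ A} :
      EAK (G ++ [(A ::ₘ Γ, Δ)]) → EAK (G ++ [(Γ, Fm.neg A ::ₘ Δ)])
  | andL {G Γ Δ A B} :
      EAK (G ++ [(A ::ₘ B ::ₘ Γ, Δ)]) → EAK (G ++ [(Fm.and A B ::ₘ Γ, Δ)])
  | andR {G Γ Δ A B} :
      EAK (G ++ [(Γ, A ::ₘ Δ)]) → EAK (G ++ [(Γ, B ::ₘ Δ)]) →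
      EAK (G ++ [(Γ, Fm.and A B ::ₘ Δ)])
  | orL {G Γ Δ A B} :
      EAK (G ++ [(A ::ₘ Γ, Δ)]) → EAK (G ++ [(B ::ₘ Γ, Δ)]) →
      EAK (G ++ [(Fm.or A B ::ₘ Γ, Δ)])
  | orR {G Γ Δ A B} :
      EAK (G ++ [(Γ, A ::ₘ B ::ₘ Δ)]) → EAK (G ++ [(Γ, Fm.or A B ::ₘ Δ)])
  | impL {G Γ Δ A B} :
      EAK (G ++ [(B ::ₘ Γ, Δ)]) → EAK (G ++ [(Γ, A ::ₘ Δ)]) →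
      EAK (G ++ [(Fm.imp A B ::ₘ Γ, Δ)])
  | impR {G Γ Δ A B} :
      EAK (G ++ [(A ::ₘ Γ, B ::ₘ Δ)]) → EAK (G ++ [(Γ, Fm.imp A B ::ₘ Δ)])
  | boxL {G Γ Δ Sg Pp A} :
      EAK (G ++ [(Γ, Δ), (A ::ₘ Sg, Pp)]) →
      EAK (G ++ [(Fm.box A ::ₘ Γ, Δ), (Sg, Pp)])
  | boxR {G Γ Δ A} :
      EAK (G ++ [(Γ, Δ), (0, {A})]) → EAK (G ++ [(Γ, Fm.box A ::ₘ Δ)])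

/-- Labelled formulas: a state variable (a natural number) together with a
formula. -/
abbrev LFm := ℕ × Fm

/-- The end-active labelled line sequent calculus `LLS_K`: sequents consist of
a singleton relation set `{z R x}` together with multisets of labelled
formulas; the propositional rules are applied to formulas labelled with the
second element of the relation, `□_L` moves a boxed formula along the
relation, and `□_R` introduces a fresh state variable. -/
inductive LLSK : ℕ → ℕ → Multiset LFm → Multiset LFm → Prop
  | init {z x : ℕ} {X Y : Multiset LFm} {m : ℕ} :
      LLSK z x ((x, Fm.var m) ::ₘ X) ((x, Fm.var m) ::ₘ Y)
  | botL {z x X Y} : LLSK z x ((x, Fm.bot) ::ₘ X) Y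
  | topR {z x X Y} : LLSK z x X ((x, Fm.top) ::ₘ Y)
  | negL {z x X Y A} :
      LLSK z x X ((x, A) ::ₘ Y) → LLSK z x ((x, Fm.neg A) ::ₘ X) Y
  | negR {z x X Y A} :
      LLSK z x ((x, A) ::ₘ X) Y → LLSK z x X ((x, Fm.neg A) ::ₘ Y)
  | andL {z x X Y A B} :
      LLSK z x ((x, A) ::ₘ (x, B) ::ₘ X) Y → LLSK z x ((x, Fm.and A B) ::ₘ X) Y
  | andR {z x X Y A B} :
      LLSK z x X ((x, A) ::ₘ Y) → LLSK z x X ((x, B) ::ₘ Y) →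
      LLSK z x X ((x, Fm.and A B) ::ₘ Y)
  | orL {z x X Y A B} :
      LLSK z x ((x, A) ::ₘ X) Y → LLSK z x ((x, B) ::ₘ X) Y →
      LLSK z x ((x, Fm.or A B) ::ₘ X) Y
  | orR {z x X Y A B} :
      LLSK z x X ((x, A) ::ₘ (x, B) ::ₘ Y) → LLSK z x X ((x, Fm.or A B) ::ₘ Y)
  | impL {z x X Y A B} :
      LLSK z x ((x, B) ::ₘ X) Y → LLSK z x X ((x, A) ::ₘ Y) →
      LLSK z x ((x, Fm.imp A B) ::ₘ X) Y
  | impR {z x X Y A B} :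
      LLSK z x ((x, A) ::ₘ X) ((x, B) ::ₘ Y) →
      LLSK z x X ((x, Fm.imp A B) ::ₘ Y)
  | boxL {x y X Y A} :
      LLSK x y ((y, A) ::ₘ X) Y → LLSK x y ((x, Fm.box A) ::ₘ X) Y
  | boxR {z x y X Y A} : y ≠ x → y ≠ z →
      (∀ p ∈ X, Prod.fst p ≠ y) → (∀ p ∈ Y, Prod.fst p ≠ y) →
      LLSK x y X ((y, A) ::ₘ Y) → LLSK z x X ((x, Fm.box A) ::ₘ Y)

/-- Formulas labelled `x` in `X`. -/
def prj (x : ℕ) (X : Multiset LFm) : Multiset Fm :=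
  (X.filter fun p => p.1 = x).map Prod.snd

theorem prj_same (x : ℕ) (A : Fm) (X : Multiset LFm) :
    prj x ((x, A) ::ₘ X) = A ::ₘ prj x X := by
  simp [prj]

theorem prj_ne {x y : ℕ} (h : y ≠ x) (A : Fm) (X : Multiset LFm) :
    prj x ((y, A) ::ₘ X) = prj x X := by
  simp [prj, h]

theorem prj_fresh {x : ℕ} {X : Multiset LFm} (h : ∀ p ∈ X, Prod.fst p ≠ x) :
    prj x X = 0 := by
  simp only [prj, Multiset.map_eq_zero]
  exact Multiset.filter_eq_nil.2 h

theorem prj_map (x : ℕ) (Γ : Multiset Fm) : prj x (Γ.map fun A => (x, A)) = Γ := by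
  induction Γ using Multiset.induction with
  | empty => rfl
  | cons a s ih => rw [Multiset.map_cons, prj_same, ih]

theorem prj_map_ne {x y : ℕ} (h : y ≠ x) (Γ : Multiset Fm) :
    prj x (Γ.map fun A => (y, A)) = 0 := by
  apply prj_fresh
  simp [h]

/-- The context `G` matches the formulas labelled `z`. -/
def Ctx (G : List Cmp) (z : ℕ) (X : Multiset LFm) : Prop :=
  (G = [] ∧ prj z X = 0) ∨ ∃ G' Δ, G = G' ++ [(prj z X, Δ)]

theorem ctx_ne {G : List Cmp} {z x : ℕ} {X : Multiset LFm} {A : Fm} (h : x ≠ z) :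
    Ctx G z ((x, A) ::ₘ X) ↔ Ctx G z X := by
  simp only [Ctx, prj_ne h]

theorem back {z x : ℕ} {X Y : Multiset LFm} (h : LLSK z x X Y) :
    z ≠ x → ∀ G, Ctx G z X → EAK (G ++ [(prj x X, prj x Y)]) := by
  induction h with
  | boxL d ih =>
    intro hn G hG
    rcases hG with ⟨_, h0⟩ | ⟨G', D, rfl⟩
    · rw [prj_same] at h0
      exact absurd h0 (Multiset.cons_ne_zero)
    · rw [prj_same, prj_ne hn]
      have := ih hn _ (Or.inr ⟨G', D, rfl⟩)
      rw [prj_same, prj_ne hn.symm] at this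
      simp only [List.append_assoc, List.cons_append, List.nil_append] at this ⊢
      exact EAK.boxL this
  | @boxR z x y X Y A hx hz hX hY d ih =>
    intro hn G hG
    have := ih hx.symm (G ++ [(prj x X, prj x Y)]) (Or.inr ⟨G, _, rfl⟩)
    rw [prj_same, prj_fresh hX, prj_fresh hY] at this
    rw [prj_same]
    simp only [List.append_assoc, List.cons_append, List.nil_append] at this
    exact EAK.boxR this
  | init => intro hn G hG; simp only [prj_same]; exact EAK.init
  | botL => intro hn G hG; simp only [prj_same]; exact EAK.botL
  | topR => intro hn G hG; simp only [prj_same]; exact EAK.topR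
  | negL d ih =>
    intro hn G hG
    simp only [prj_same, ctx_ne hn.symm] at *
    exact EAK.negL (ih hn G hG)
  | negR d ih =>
    intro hn G hG
    simp only [prj_same, ctx_ne hn.symm] at *
    exact EAK.negR (ih hn G hG)
  | andL d ih =>
    intro hn G hG
    simp only [prj_same, ctx_ne hn.symm] at *
    exact EAK.andL (ih hn G hG)
  | andR d e ih ih2 =>
    intro hn G hG
    simp only [prj_same, ctx_ne hn.symm] at *
    exact EAK.andR (ih hn G hG) (ih2 hn G hG)
  | orL d e ih ih2 =>
    intro hn G hG
    simp only [prj_same, ctx_ne hn.symm] at *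
    exact EAK.orL (ih hn G hG) (ih2 hn G hG)
  | orR d ih =>
    intro hn G hG
    simp only [prj_same, ctx_ne hn.symm] at *
    exact EAK.orR (ih hn G hG)
  | impL d e ih ih2 =>
    intro hn G hG
    simp only [prj_same, ctx_ne hn.symm] at *
    exact EAK.impL (ih hn G hG) (ih2 hn G hG)
  | impR d ih =>
    intro hn G hG
    simp only [prj_same, ctx_ne hn.symm] at *
    exact EAK.impR (ih hn G hG)

/-- Label the formulas of a list of multisets by consecutive numbers. -/
def lab (k : ℕ) : List (Multiset Fm) → Multiset LFm
  | [] => 0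
  | c :: G => c.map (fun A => (k, A)) + lab (k + 1) G

theorem lab_append (k : ℕ) (G H : List (Multiset Fm)) :
    lab k (G ++ H) = lab k G + lab (k + G.length) H := by
  induction G generalizing k with
  | nil => simp [lab]
  | cons c G ih =>
    simp only [List.cons_append, lab, ih, List.length_cons, add_assoc]
    rw [add_comm 1 G.length]

theorem lab_lt {k : ℕ} {G : List (Multiset Fm)} {p : LFm} (h : p ∈ lab k G) :
    p.1 < k + G.length := by
  induction G generalizing k with
  | nil => simp [lab] at h
  | cons c G ih =>
    simp only [lab, Multiset.mem_add, Multiset.mem_map] at h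
    rcases h with ⟨a, _, rfl⟩ | h
    · simp
    · have := ih h
      simp only [List.length_cons]
      omega

/-- Translation of a linear nested sequent is derivable. -/
def Tr (S : List Cmp) : Prop :=
  LLSK (S.length - 1) S.length (lab 1 (S.map Prod.fst)) (lab 1 (S.map Prod.snd))

theorem tr_snoc (G : List Cmp) (Γ Δ : Multiset Fm) :
    Tr (G ++ [(Γ, Δ)]) ↔ LLSK G.length (G.length + 1)
      (Γ.map (fun A => (G.length + 1, A)) + lab 1 (G.map Prod.fst))
      (Δ.map (fun A => (G.length + 1, A)) + lab 1 (G.map Prod.snd)) := by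
  simp only [Tr, List.length_append, List.length_singleton, List.map_append, lab_append,
    List.map_cons, List.map_nil, List.length_map, lab, add_zero, Nat.add_sub_cancel,
    add_comm 1 G.length]
  rw [add_comm (lab 1 _), add_comm (lab 1 _)]

theorem tr_snoc2 (G : List Cmp) (Γ Δ Sg Pp : Multiset Fm) :
    Tr (G ++ [(Γ, Δ), (Sg, Pp)]) ↔ LLSK (G.length + 1) (G.length + 1 + 1)
      (Sg.map (fun A => (G.length + 1 + 1, A)) +
        (Γ.map (fun A => (G.length + 1, A)) + lab 1 (G.map Prod.fst)))
      (Pp.map (fun A => (G.length + 1 + 1, A)) +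
        (Δ.map (fun A => (G.length + 1, A)) + lab 1 (G.map Prod.snd))) := by
  have := tr_snoc (G ++ [(Γ, Δ)]) Sg Pp
  simp only [List.append_assoc, List.cons_append, List.nil_append] at this
  rw [this]
  simp only [List.length_append, List.length_singleton, List.map_append, lab_append,
    List.map_cons, List.map_nil, List.length_map, lab, add_zero, add_comm 1 G.length]
  rw [add_comm (lab 1 (G.map Prod.fst)), add_comm (lab 1 (G.map Prod.snd))]

theorem forth {S : List Cmp} (h : EAK S) : Tr S := by
  induction h with
  | boxL d ih =>
    rw [tr_snoc2] at ih ⊢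
    simp only [Multiset.map_cons, Multiset.cons_add, Multiset.add_cons] at *
    exact LLSK.boxL ih
  | @boxR G Γ Δ A d ih =>
    rw [tr_snoc2] at ih
    rw [tr_snoc]
    simp only [Multiset.map_cons, Multiset.cons_add, Multiset.map_zero, zero_add,
      Multiset.map_singleton, Multiset.singleton_add] at *
    have key : ∀ (T : Multiset Fm) (f : Cmp → Multiset Fm),
        ∀ p ∈ T.map (fun A => (G.length + 1, A)) + lab 1 (G.map f),
          Prod.fst p ≠ G.length + 1 + 1 := by
      intro T f p hp
      simp only [Multiset.mem_add, Multiset.mem_map] at hp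
      rcases hp with ⟨a, _, rfl⟩ | h
      · simp
      · have := lab_lt h
        rw [List.length_map] at this
        omega
    exact LLSK.boxR (by omega) (by omega) (key _ _) (key _ _) ih
  | init => rw [tr_snoc]; simp only [Multiset.map_cons, Multiset.cons_add]; exact LLSK.init
  | botL => rw [tr_snoc]; simp only [Multiset.map_cons, Multiset.cons_add]; exact LLSK.botL
  | topR => rw [tr_snoc]; simp only [Multiset.map_cons, Multiset.cons_add]; exact LLSK.topR
  | negL d ih =>
    simp only [tr_snoc, Multiset.map_cons, Multiset.cons_add] at *
    exact LLSK.negL ih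
  | negR d ih =>
    simp only [tr_snoc, Multiset.map_cons, Multiset.cons_add] at *
    exact LLSK.negR ih
  | andL d ih =>
    simp only [tr_snoc, Multiset.map_cons, Multiset.cons_add] at *
    exact LLSK.andL ih
  | andR d e ih ih2 =>
    simp only [tr_snoc, Multiset.map_cons, Multiset.cons_add] at *
    exact LLSK.andR ih ih2
  | orL d e ih ih2 =>
    simp only [tr_snoc, Multiset.map_cons, Multiset.cons_add] at *
    exact LLSK.orL ih ih2
  | orR d ih =>
    simp only [tr_snoc, Multiset.map_cons, Multiset.cons_add] at *
    exact LLSK.orR ih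
  | impL d e ih ih2 =>
    simp only [tr_snoc, Multiset.map_cons, Multiset.cons_add] at *
    exact LLSK.impL ih ih2
  | impR d ih =>
    simp only [tr_snoc, Multiset.map_cons, Multiset.cons_add] at *
    exact LLSK.impR ih

/-- A sequent `Γ ⇒ Δ` is provable in the end-active variant of the linear
nested sequent calculus `LNS_K` if and only if its translation
`TL_{x₁}(Γ ⇒ Δ) = x₀Rx₁, x₁:Γ ⇒ x₁:Δ` is provable in the end-active labelled
line sequent calculus `LLS_K` (taking `x₀ = 0` and `x₁ = 1`). -/
theorem endActive_LNSK_iff_LLSK (Γ Δ : Multiset Fm) :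
    EAK [(Γ, Δ)] ↔
      LLSK 0 1 (Γ.map fun A => (1, A)) (Δ.map fun A => (1, A)) := by
  constructor
  · intro h
    have := (tr_snoc [] Γ Δ).1 (forth h)
    simpa [lab] using this
  · intro h
    have := back h (by decide) [] (Or.inl ⟨rfl, prj_map_ne (by decide) Γ⟩)
    simpa only [prj_map, List.nil_append] using this
end
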